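/- Let φ = ∑_{ℓ mod 2m} h_ℓ·θ_{m,ℓ} be a mock Jacobi form of weight 2 and index m with optimal growth, with coefficients C(Δ,ℓ). Then for each r ∈ ℤ, as Δ → +∞ through integers with Δ ≡ −r² (mod 4m), one has C(Δ,r) = κ_r·e^{π√Δ/m} + O(e^{π√Δ/(2m)}), where κ_r := −∑_{ℓ mod 2m, ℓ² ≡ 1 (mod 4m)} C(−1,ℓ)·cos(πℓr/m). -/

import Mathlib

noncomputable section

open Complex Filter Topology MeasureTheory
open scoped Classical

/-- `ee x = e^{2πix}`. -/
def ee (x : ℂ) : ℂ := Complex.exp (2 * (Real.pi : ℂ) * Complex.I * x)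

/-- The index-`m` elliptic transformation law on `ℍ × ℂ`. -/
def EllipticLaw (m : ℕ) (φ : ℂ → ℂ → ℂ) : Prop :=
  ∀ τ : ℂ, 0 < τ.im → ∀ z : ℂ, ∀ lam mu : ℤ,
    φ τ (z + (lam : ℂ) * τ + (mu : ℂ)) =
      ee (-(m : ℂ) * ((lam : ℂ) ^ 2 * τ + 2 * (lam : ℂ) * z)) * φ τ z

/-- The weight-`k` index-`m` modular transformation law on `ℍ × ℂ`. -/
def ModularLaw (k : ℤ) (m : ℕ) (φ : ℂ → ℂ → ℂ) : Prop :=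
  ∀ τ : ℂ, 0 < τ.im → ∀ z : ℂ, ∀ a b c d : ℤ, a * d - b * c = 1 →
    φ (((a : ℂ) * τ + (b : ℂ)) / ((c : ℂ) * τ + (d : ℂ))) (z / ((c : ℂ) * τ + (d : ℂ))) =
      ((c : ℂ) * τ + (d : ℂ)) ^ k *
        ee ((m : ℂ) * (c : ℂ) * z ^ 2 / ((c : ℂ) * τ + (d : ℂ))) * φ τ z

/-- The theta function `θ_{m,ℓ}(τ,z) = ∑_{r ≡ ℓ (mod 2m)} q^{r²/4m} y^r`. -/
def jTheta (m : ℕ) (l : ℤ) (τ z : ℂ) : ℂ :=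
  ∑' n : ℤ, ee (((l : ℂ) + 2 * (m : ℂ) * (n : ℂ)) ^ 2 / (4 * (m : ℂ)) * τ +
      ((l : ℂ) + 2 * (m : ℂ) * (n : ℂ)) * z)

/-- The point `z_s = ατ + β` for `s = (α,β) ∈ ℚ²`. -/
def zpt (s : ℚ × ℚ) (τ : ℂ) : ℂ := (s.1 : ℚ) * τ + (s.2 : ℚ)

/-- The nonholomorphic Eichler integral
`g*(τ) = (i/2π)^{1/2} ∫_{-conj(τ)}^{i∞} (z+τ)^{-3/2}·conj(g(-conj z)) dz`, the integral
taken along the vertical line upward from `-conj(τ)` (parametrized by `z = -conj(τ) + it`,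
`t ∈ (0,∞)`, so that `-conj z = τ + it` and `dz = i dt`), with principal branches. -/
def eich (g : ℂ → ℂ) (τ : ℂ) : ℂ :=
  (Complex.I / (2 * (Real.pi : ℂ))) ^ ((1 : ℂ) / 2) *
    ∫ t in Set.Ioi (0 : ℝ),
      ((-(starRingEnd ℂ) τ + Complex.I * (t : ℂ)) + τ) ^ (-(3 : ℂ) / 2) *
        (starRingEnd ℂ) (g (τ + Complex.I * (t : ℂ))) * Complex.I

/-- `κ_r = -∑_{ℓ mod 2m, ℓ² ≡ 1 (mod 4m)} C(-1,ℓ)·cos(πℓr/m)`. -/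
def kapp (m : ℕ) (C : ℤ → ℤ → ℂ) (r : ℤ) : ℂ :=
  -∑ l ∈ (Finset.range (2 * m)).filter (fun l => (4 * (m : ℤ)) ∣ ((l : ℤ) ^ 2 - 1)),
      C (-1) (l : ℤ) * (Real.cos (Real.pi * (l : ℝ) * (r : ℝ) / (m : ℝ)) : ℂ)


lemma ee_add (x y : ℂ) : ee (x + y) = ee x * ee y := by
  simp only [ee, mul_add, Complex.exp_add]

lemma ee_int (n : ℤ) : ee n = 1 := by
  rw [ee, mul_comm]
  exact Complex.exp_int_mul_two_pi_mul_I n ▸ (by ring_nf)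

lemma ee_zero : ee 0 = 1 := by simp [ee]

lemma ee_neg (x : ℂ) : ee (-x) = (ee x)⁻¹ := by
  simp only [ee, mul_neg, Complex.exp_neg]

lemma ee_ne (x : ℂ) : ee x ≠ 0 := Complex.exp_ne_zero _

lemma norm_ee (x : ℂ) : ‖ee x‖ = Real.exp (-(2 * Real.pi * x.im)) := by
  rw [ee, Complex.norm_exp]
  congr 1
  simp [Complex.mul_re]

lemma jTheta_term (m : ℕ) (hm : 0 < m) (l : ℤ) (τ z : ℂ) (n : ℤ) :
    ee (((l : ℂ) + 2 * (m : ℂ) * (n : ℂ)) ^ 2 / (4 * (m : ℂ)) * τ +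
      ((l : ℂ) + 2 * (m : ℂ) * (n : ℂ)) * z) =
    ee ((l : ℂ) ^ 2 / (4 * m) * τ + l * z) * jacobiTheta₂_term n (l * τ + 2 * m * z) (2 * m * τ) := by
  have : (m : ℂ) ≠ 0 := by exact_mod_cast hm.ne'
  rw [ee, ee, jacobiTheta₂_term, ← Complex.exp_add]
  congr 1
  field_simp
  ring

lemma im_pos_aux (m : ℕ) (hm : 0 < m) (τ : ℂ) (hτ : 0 < τ.im) : 0 < (2 * (m : ℂ) * τ).im := by
  have h : (2 * (m : ℂ) * τ).im = 2 * m * τ.im := by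
    simp [Complex.mul_im]
  rw [h]
  have : (0:ℝ) < m := by exact_mod_cast hm
  positivity

lemma jTheta_hasSum (m : ℕ) (hm : 0 < m) (l : ℤ) (τ z : ℂ) (hτ : 0 < τ.im) :
    HasSum (fun n : ℤ => ee (((l : ℂ) + 2 * (m : ℂ) * (n : ℂ)) ^ 2 / (4 * (m : ℂ)) * τ +
      ((l : ℂ) + 2 * (m : ℂ) * (n : ℂ)) * z)) (jTheta m l τ z) := by
  have : Summable (fun n : ℤ => ee (((l : ℂ) + 2 * (m : ℂ) * (n : ℂ)) ^ 2 / (4 * (m : ℂ)) * τ +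
      ((l : ℂ) + 2 * (m : ℂ) * (n : ℂ)) * z)) := by
    simp_rw [jTheta_term m hm]
    apply Summable.mul_left
    exact (summable_jacobiTheta₂_term_iff _ _).2 (im_pos_aux m hm τ hτ)
  exact this.hasSum

lemma jTheta_eq (m : ℕ) (hm : 0 < m) (l : ℤ) (τ z : ℂ) :
    jTheta m l τ z =
      ee ((l : ℂ) ^ 2 / (4 * m) * τ + l * z) * jacobiTheta₂ (l * τ + 2 * m * z) (2 * m * τ) := by
  rw [jTheta]
  simp_rw [jTheta_term m hm]
  rw [tsum_mul_left, jacobiTheta₂]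

lemma hasSum_split (N : ℕ) (hN : 0 < N) (f : ℤ → ℂ) (hf : Summable f) :
    ∑' n, f n = ∑ l ∈ Finset.range N, ∑' n : ℤ, f (l + N * n) := by
  have : NeZero N := ⟨hN.ne'⟩
  rw [← (Int.divModEquiv N).symm.tsum_eq f]
  have hs : Summable (fun p : ℤ × Fin N => f ((Int.divModEquiv N).symm p)) :=
    (Int.divModEquiv N).symm.summable_iff.2 hf
  rw [← (Equiv.prodComm (Fin N) ℤ).tsum_eq]
  have hs' : Summable (fun p : Fin N × ℤ => f ((Int.divModEquiv N).symm (p.2, p.1))) :=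
    (Equiv.prodComm (Fin N) ℤ).summable_iff.2 hs
  rw [Summable.tsum_prod (f := fun p : Fin N × ℤ =>
    f ((Int.divModEquiv N).symm ((Equiv.prodComm (Fin N) ℤ) p))) hs', tsum_fintype,
    Finset.sum_range]
  apply Finset.sum_congr rfl
  intro i _
  apply tsum_congr
  intro n
  simp only [Equiv.prodComm_apply, Prod.swap, Int.divModEquiv_symm_apply]
  congr 1
  ring

lemma im_neg_inv (τ : ℂ) : (-1 / τ).im = τ.im / ‖τ‖ ^ 2 := by
  rw [neg_div, Complex.neg_im, one_div, Complex.inv_im, Complex.normSq_eq_norm_sq]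
  ring

lemma ne_of_im (τ : ℂ) (hτ : 0 < τ.im) : τ ≠ 0 := by
  rintro rfl; simp at hτ

lemma im_neg_inv_pos (τ : ℂ) (hτ : 0 < τ.im) : 0 < (-1 / τ).im := by
  rw [im_neg_inv]
  have := norm_pos_iff.2 (ne_of_im τ hτ)
  positivity

lemma jTheta_S (m : ℕ) (hm : 0 < m) (l : ℤ) (τ z : ℂ) (hτ : 0 < τ.im) :
    jTheta m l τ z = 1 / (-I * (2 * m * τ)) ^ (1 / 2 : ℂ) * ee (-(m * z ^ 2 / τ)) *
      ∑ k ∈ Finset.range (2 * m), ee (l * k / (2 * m)) * jTheta m (k : ℤ) (-1 / τ) (z / τ) := by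
  have hm' : (m : ℂ) ≠ 0 := by exact_mod_cast hm.ne'
  have hτ0 := ne_of_im τ hτ
  rw [jTheta_eq m hm, jacobiTheta₂_functional_equation]
  have h1 : jacobiTheta₂ ((l * τ + 2 * m * z) / (2 * m * τ)) (-1 / (2 * m * τ)) =
      ∑ k ∈ Finset.range (2 * m), ee (l * k / (2 * m)) * jTheta m (k : ℤ) (-1 / τ) (z / τ) := by
    rw [jacobiTheta₂, hasSum_split (2 * m) (by omega) _
      ((summable_jacobiTheta₂_term_iff _ _).2 (im_neg_inv_pos _ (im_pos_aux m hm τ hτ)))]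
    apply Finset.sum_congr rfl
    intro k _
    rw [jTheta, ← tsum_mul_left]
    apply tsum_congr
    intro n
    have : ee (l * k / (2 * m)) = ee (l * k / (2 * m) + (l * n : ℤ)) := by
      rw [ee_add, ee_int, mul_one]
    rw [this, ← ee_add, jacobiTheta₂_term, ee]
    congr 1
    push_cast
    field_simp
    ring
  rw [h1]
  have h2 : ee ((l : ℂ) ^ 2 / (4 * m) * τ + l * z) *
      cexp (-Real.pi * I * (l * τ + 2 * m * z) ^ 2 / (2 * m * τ)) = ee (-(m * z ^ 2 / τ)) := by
    rw [ee, ee, ← Complex.exp_add]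
    congr 1
    field_simp
    ring
  rw [← h2]
  ring

lemma integral_ee_int (d : ℤ) : ∫ x in (-(1/2) : ℝ)..(1/2), ee (d * x) = if d = 0 then 1 else 0 := by
  split_ifs with h
  · subst h
    simp [ee_zero]
    norm_num
  · have hd : (2 * (Real.pi : ℂ) * I * d) ≠ 0 := by
      simp [h, Real.pi_ne_zero]
    have : ∀ x : ℝ, ee (d * x) = cexp ((2 * (Real.pi : ℂ) * I * d) * x) := by
      intro x; rw [ee]; congr 1; ring
    simp_rw [this]
    rw [integral_exp_mul_complex hd]
    have h2 : cexp (2 * (Real.pi : ℂ) * I * d * ((1 / 2 : ℝ) : ℂ)) =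
        cexp (2 * (Real.pi : ℂ) * I * d * ((-(1 / 2) : ℝ) : ℂ)) := by
      rw [Complex.exp_eq_exp_iff_exists_int]
      exact ⟨d, by push_cast; ring⟩
    rw [h2, sub_self, zero_div]

lemma ee_cont : Continuous ee := by
  unfold ee; fun_prop

lemma integral_fourier {ι : Type} [Countable ι] (c : ι → ℂ) (d : ι → ℤ) (F : ℝ → ℂ) (hc : Summable c)
    (hF : ∀ x : ℝ, HasSum (fun i => c i * ee (d i * x)) (F x)) :
    ∫ x in (-(1/2) : ℝ)..(1/2), F x = ∑' i, if d i = 0 then c i else 0 := by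
  have hn : ∀ i (x : ℝ), ‖c i * ee (d i * x)‖ = ‖c i‖ := by
    intro i x
    rw [norm_mul, norm_ee]
    simp
  have h := intervalIntegral.hasSum_integral_of_dominated_convergence
    (a := -(1/2)) (b := 1/2) (μ := volume) (F := fun i (x:ℝ) => c i * ee (d i * x)) (f := F)
    (fun i _ => ‖c i‖) (by
      intro i
      apply Continuous.aestronglyMeasurable
      exact continuous_const.mul (ee_cont.comp (by fun_prop))) (by
      intro i
      exact Eventually.of_forall fun x _ => (hn i x).le) (by
      exact Eventually.of_forall fun x _ => hc.norm) (by
      exact intervalIntegrable_const) (by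
      exact Eventually.of_forall fun x _ => hF x)
  rw [← h.tsum_eq]
  apply tsum_congr
  intro i
  rw [intervalIntegral.integral_const_mul, integral_ee_int]
  split_ifs <;> simp

lemma jTheta_coeff (m : ℕ) (hm : 0 < m) (k l : ℕ) (hk : k < 2 * m) (hl : l < 2 * m) (τ : ℂ)
    (hτ : 0 < τ.im) :
    ∫ x in (-(1/2) : ℝ)..(1/2), jTheta m (l : ℤ) τ x * ee (-k * x) =
      if l = k then ee ((k : ℂ) ^ 2 / (4 * m) * τ) else 0 := by
  have hs := (jTheta_hasSum m hm l τ 0 hτ).summable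
  rw [integral_fourier (ι := ℤ) _ (fun n => l + 2 * m * n - k) _ hs]
  · split_ifs with h
    · subst h
      rw [tsum_eq_single 0]
      · simp
      · intro n hn
        rw [if_neg]
        simp [hn, hm.ne']
    · refine (tsum_congr fun n => ?_).trans tsum_zero
      rw [if_neg]
      intro h2
      apply h
      have h3 : ((l : ℤ) - k) = 2 * m * (-n) := by linarith
      have h4 : ((2 * m : ℕ) : ℤ) ∣ (l : ℤ) - k := ⟨-n, by rw [h3]; push_cast; ring⟩
      have := Int.eq_zero_of_abs_lt_dvd h4 (by rw [abs_lt]; constructor <;> omega)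
      omega
  · intro x
    have := (jTheta_hasSum m hm l τ x hτ).mul_right (ee (-k * x))
    refine Eq.subst (motive := fun f => HasSum f _) (funext fun n => ?_) this
    symm
    rw [← ee_add, ← ee_add]
    congr 1
    push_cast
    ring

lemma jTheta_unique (m : ℕ) (hm : 0 < m) (τ : ℂ) (hτ : 0 < τ.im) (c : ℕ → ℂ)
    (h : ∀ w : ℂ, ∑ l ∈ Finset.range (2 * m), c l * jTheta m (l : ℤ) τ w = 0) (k : ℕ)
    (hk : k < 2 * m) : c k = 0 := by
  have hcont : ∀ l : ℤ, Continuous fun x : ℝ => jTheta m l τ x := by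
    intro l
    simp_rw [jTheta_eq m hm]
    refine Continuous.mul (ee_cont.comp (by fun_prop)) ?_
    have : ∀ w : ℂ, ContinuousAt (fun z => jacobiTheta₂ z (2 * m * τ)) w := fun w =>
      (differentiableAt_jacobiTheta₂_fst w (im_pos_aux m hm τ hτ)).continuousAt
    exact (continuous_iff_continuousAt.2 this).comp (by fun_prop)
  have h0 : ∫ x in (-(1/2) : ℝ)..(1/2), (∑ l ∈ Finset.range (2 * m), c l * jTheta m (l : ℤ) τ x) *
      ee (-k * x) = 0 := by
    simp [h]
  simp_rw [Finset.sum_mul, mul_assoc] at h0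
  rw [intervalIntegral.integral_finsetSum] at h0
  · simp_rw [intervalIntegral.integral_const_mul] at h0
    rw [Finset.sum_eq_single k] at h0
    · rw [jTheta_coeff m hm k k hk hk τ hτ, if_pos rfl] at h0
      exact (mul_eq_zero.1 h0).resolve_right (ee_ne _)
    · intro l hl hlk
      rw [jTheta_coeff m hm k l hk (Finset.mem_range.1 hl) τ hτ, if_neg hlk, mul_zero]
    · intro hk'; exact absurd (Finset.mem_range.2 hk) hk'
  · intro i _
    apply Continuous.intervalIntegrable
    exact continuous_const.mul ((hcont i).mul (ee_cont.comp (by fun_prop)))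

lemma H_S (m : ℕ) (hm : 0 < m) (H : ℤ → ℂ → ℂ)
    (hmod : ModularLaw 2 m (fun τ z =>
      ∑ l ∈ Finset.range (2 * m), H (l : ℤ) τ * jTheta m (l : ℤ) τ z)) (k : ℕ) (hk : k < 2 * m)
    (τ : ℂ) (hτ : 0 < τ.im) :
    H k (-1 / τ) = τ ^ 2 * (1 / (-I * (2 * m * τ)) ^ (1 / 2 : ℂ)) *
      ∑ l ∈ Finset.range (2 * m), ee (l * k / (2 * m)) * H l τ := by
  have hτ0 := ne_of_im τ hτ
  rw [← sub_eq_zero]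
  refine jTheta_unique m hm (-1 / τ) (im_neg_inv_pos τ hτ) (fun k : ℕ => H k (-1 / τ) -
    τ ^ 2 * (1 / (-I * (2 * m * τ)) ^ (1 / 2 : ℂ)) *
      ∑ l ∈ Finset.range (2 * m), ee (l * k / (2 * m)) * H l τ) (fun w => ?_) k hk
  have h := hmod τ hτ (w * τ) 0 (-1) 1 0 (by norm_num)
  simp only [Int.cast_zero, Int.cast_neg, Int.cast_one, zero_mul, one_mul, add_zero, zero_add,
    mul_one] at h
  rw [mul_div_cancel_right₀ _ hτ0] at h
  simp_rw [sub_mul]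
  rw [Finset.sum_sub_distrib, h, sub_eq_zero]
  simp_rw [jTheta_S m hm _ τ (w * τ) hτ, mul_div_cancel_right₀ _ hτ0]
  have e1 : ee (m * (w * τ) ^ 2 / τ) * ee (-(m * (w * τ) ^ 2 / τ)) = 1 := by
    rw [← ee_add, add_neg_cancel, ee_zero]
  have e2 : ∀ A : ℂ, ∀ P : ℕ → ℂ, ∑ l ∈ Finset.range (2 * m), H l τ * (A * P l) =
      A * ∑ l ∈ Finset.range (2 * m), H l τ * P l := by
    intro A P
    rw [Finset.mul_sum]
    exact Finset.sum_congr rfl fun _ _ => by ring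
  simp_rw [zpow_ofNat]
  rw [e2]
  set D := 1 / (-I * (2 * m * τ)) ^ (1 / 2 : ℂ)
  set E1 := ee (m * (w * τ) ^ 2 / τ)
  set E2 := ee (-(m * (w * τ) ^ 2 / τ))
  rw [show ∀ X : ℂ, τ ^ 2 * E1 * (D * E2 * X) = τ ^ 2 * D * X * (E1 * E2) by intro X; ring, e1,
    mul_one]
  simp_rw [mul_assoc (τ ^ 2 * D)]
  rw [← Finset.mul_sum]
  congr 1
  simp_rw [Finset.mul_sum, Finset.sum_mul]
  rw [Finset.sum_comm]
  refine Finset.sum_congr rfl fun _ _ => Finset.sum_congr rfl fun _ _ => ?_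
  push_cast
  ring

lemma jTheta_T (m : ℕ) (hm : 0 < m) (l : ℤ) (τ z : ℂ) :
    jTheta m l (τ + 1) z = ee ((l : ℂ) ^ 2 / (4 * m)) * jTheta m l τ z := by
  have hm' : (m : ℂ) ≠ 0 := by exact_mod_cast hm.ne'
  rw [jTheta, jTheta, ← tsum_mul_left]
  refine tsum_congr fun n => ?_
  have h1 : ee ((l : ℂ) ^ 2 / (4 * m)) = ee ((l : ℂ) ^ 2 / (4 * m) + (l * n + m * n ^ 2 : ℤ)) := by
    rw [ee_add, ee_int, mul_one]
  rw [h1, ← ee_add]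
  congr 1
  push_cast
  field_simp
  ring

lemma H_T (m : ℕ) (hm : 0 < m) (H : ℤ → ℂ → ℂ)
    (hmod : ModularLaw 2 m (fun τ z =>
      ∑ l ∈ Finset.range (2 * m), H (l : ℤ) τ * jTheta m (l : ℤ) τ z)) (k : ℕ) (hk : k < 2 * m)
    (τ : ℂ) (hτ : 0 < τ.im) :
    H k (τ + 1) * ee ((k : ℂ) ^ 2 / (4 * m)) = H k τ := by
  rw [← sub_eq_zero]
  refine jTheta_unique m hm τ hτ (fun k : ℕ => H k (τ + 1) * ee ((k : ℂ) ^ 2 / (4 * m)) - H k τ)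
    (fun w => ?_) k hk
  have h := hmod τ hτ w 1 1 0 1 (by norm_num)
  simp only [Int.cast_zero, Int.cast_one, zero_mul, one_mul, zero_add, mul_zero,
    one_zpow, div_one, ee_zero] at h
  simp_rw [sub_mul]
  rw [Finset.sum_sub_distrib, ← h, sub_eq_zero]
  refine Finset.sum_congr rfl fun l _ => ?_
  rw [jTheta_T m hm]
  push_cast
  ring

lemma sum_ee (N : ℕ) (hN : 0 < N) (d : ℤ) :
    ∑ k ∈ Finset.range N, ee (d * k / N) = if (N : ℤ) ∣ d then (N : ℂ) else 0 := by
  have hN' : (N : ℂ) ≠ 0 := by exact_mod_cast hN.ne'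
  have hpow : ∀ k : ℕ, ee (d * k / N) = ee (d / N) ^ k := by
    intro k
    rw [ee, ee, ← Complex.exp_nat_mul]
    congr 1
    ring
  simp_rw [hpow]
  split_ifs with h
  · obtain ⟨e, rfl⟩ := h
    have : ee (((N * e : ℤ) : ℂ) / N) = 1 := by
      rw [← ee_int e]
      congr 1
      push_cast
      field_simp
    simp_rw [this]
    simp
  · have hne : ee (d / N) ≠ 1 := by
      intro h1
      rw [ee, Complex.exp_eq_one_iff] at h1
      obtain ⟨n, hn⟩ := h1
      apply h
      have h3 : (2 * (Real.pi : ℂ) * I) ≠ 0 := Complex.two_pi_I_ne_zero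
      have h2 : (d : ℂ) / N = n := by
        have : (2 * (Real.pi : ℂ) * I) * (d / N) = (2 * (Real.pi : ℂ) * I) * n := by
          rw [hn]; ring
        exact mul_left_cancel₀ h3 this
      rw [div_eq_iff hN'] at h2
      exact ⟨n, by rw [mul_comm]; exact_mod_cast h2⟩
    rw [geom_sum_eq hne, ← hpow, mul_div_cancel_right₀ _ hN', ee_int, sub_self, zero_div]

lemma parseval (N : ℕ) (hN : 0 < N) (c : ℕ → ℂ) :
    ∑ k ∈ Finset.range N, ‖∑ l ∈ Finset.range N, ee (l * k / N) * c l‖ ^ 2 =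
      N * ∑ l ∈ Finset.range N, ‖c l‖ ^ 2 := by
  have hee : ∀ l k : ℕ, (starRingEnd ℂ) (ee (l * k / N)) = ee (-(l * k / N)) := by
    intro l k
    rw [ee, ee, ← Complex.exp_conj]
    congr 1
    simp only [map_mul, map_div₀, Complex.conj_ofNat, Complex.conj_ofReal, Complex.conj_I, map_natCast]
    ring
  apply Complex.ofReal_injective
  push_cast
  simp_rw [← Complex.mul_conj', map_sum, map_mul, hee, Finset.sum_mul_sum]
  rw [Finset.sum_comm, Finset.mul_sum]
  refine Finset.sum_congr rfl fun l hl => ?_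
  rw [Finset.sum_comm, Finset.sum_eq_single l]
  · have : ∀ k : ℕ, ee (l * k / N) * c l * (ee (-(l * k / N)) * (starRingEnd ℂ) (c l)) =
        c l * (starRingEnd ℂ) (c l) := by
      intro k
      rw [ee_neg]
      have := ee_ne (l * k / N)
      field_simp
    simp [this]
  · intro j hj hjl
    have : ∀ k : ℕ, ee (l * k / N) * c l * (ee (-(j * k / N)) * (starRingEnd ℂ) (c j)) =
        ee (((l - j : ℤ) : ℂ) * k / N) * (c l * (starRingEnd ℂ) (c j)) := by
      intro k
      rw [show (((l - j : ℤ) : ℂ) * k / N) = l * k / N + -(j * k / N) by push_cast; ring, ee_add]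
      ring
    simp_rw [this]
    rw [← Finset.sum_mul, sum_ee N hN, if_neg, zero_mul]
    intro hd
    have hl' := Finset.mem_range.1 hl
    have hj' := Finset.mem_range.1 hj
    have := Int.eq_zero_of_abs_lt_dvd hd (by rw [abs_lt]; constructor <;> omega)
    omega
  · intro h; exact absurd hl h

/-- the invariant -/
def NN (m : ℕ) (H : ℤ → ℂ → ℂ) (τ : ℂ) : ℝ :=
  τ.im ^ 3 * (∑ l ∈ Finset.range (2 * m), ‖H l τ‖ ^ 2) ^ 2

lemma NN_S (m : ℕ) (hm : 0 < m) (H : ℤ → ℂ → ℂ)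
    (hmod : ModularLaw 2 m (fun τ z =>
      ∑ l ∈ Finset.range (2 * m), H (l : ℤ) τ * jTheta m (l : ℤ) τ z))
    (τ : ℂ) (hτ : 0 < τ.im) : NN m H (-1 / τ) = NN m H τ := by
  have hτ0 := ne_of_im τ hτ
  have hm' : (0:ℝ) < m := by exact_mod_cast hm
  have hn : 0 < ‖τ‖ := norm_pos_iff.2 hτ0
  have h1 : ∑ k ∈ Finset.range (2 * m), ‖H k (-1 / τ)‖ ^ 2 =
      ‖τ ^ 2 * (1 / (-I * (2 * m * τ)) ^ (1 / 2 : ℂ))‖ ^ 2 * ((2 * m : ℕ) *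
        ∑ l ∈ Finset.range (2 * m), ‖H l τ‖ ^ 2) := by
    rw [← parseval (2 * m) (by omega) (fun l => H l τ), Finset.mul_sum]
    refine Finset.sum_congr rfl fun k hk => ?_
    rw [H_S m hm H hmod k (Finset.mem_range.1 hk) τ hτ, norm_mul, mul_pow]
    push_cast
    rfl
  have h2 : ‖τ ^ 2 * (1 / (-I * (2 * m * τ)) ^ (1 / 2 : ℂ))‖ ^ 2 = ‖τ‖ ^ 3 / (2 * m) := by
    have : (1 / 2 : ℂ) = ((1 / 2 : ℝ) : ℂ) := by push_cast; rfl
    rw [norm_mul, norm_div, this, Complex.norm_cpow_real, mul_pow, div_pow, ← Real.sqrt_eq_rpow,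
      Real.sq_sqrt (norm_nonneg _)]
    simp
    field_simp
  rw [NN, NN, h1, h2, im_neg_inv]
  push_cast
  field_simp

lemma NN_T (m : ℕ) (hm : 0 < m) (H : ℤ → ℂ → ℂ)
    (hmod : ModularLaw 2 m (fun τ z =>
      ∑ l ∈ Finset.range (2 * m), H (l : ℤ) τ * jTheta m (l : ℤ) τ z))
    (τ : ℂ) (hτ : 0 < τ.im) : NN m H (τ + 1) = NN m H τ := by
  have h1 : ∑ k ∈ Finset.range (2 * m), ‖H k (τ + 1)‖ ^ 2 =
        ∑ l ∈ Finset.range (2 * m), ‖H l τ‖ ^ 2 := by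
    refine Finset.sum_congr rfl fun k hk => ?_
    rw [← H_T m hm H hmod k (Finset.mem_range.1 hk) τ hτ, norm_mul, norm_ee]
    have : ((k : ℂ) ^ 2 / (4 * m)).im = 0 := by
      rw [show ((k : ℂ) ^ 2 / (4 * m)) = ((k ^ 2 / (4 * m) : ℝ) : ℂ) by push_cast; rfl]
      exact Complex.ofReal_im _
    simp [this]
  rw [NN, NN, h1]
  simp

open UpperHalfPlane in
lemma NN_inv (m : ℕ) (hm : 0 < m) (H : ℤ → ℂ → ℂ)
    (hmod : ModularLaw 2 m (fun τ z =>
      ∑ l ∈ Finset.range (2 * m), H (l : ℤ) τ * jTheta m (l : ℤ) τ z))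
    (γ : Matrix.SpecialLinearGroup (Fin 2) ℤ) :
    ∀ z : UpperHalfPlane, NN m H (γ • z : UpperHalfPlane) = NN m H z := by
  have hγ : γ ∈ Subgroup.closure {ModularGroup.S, ModularGroup.T} := by
    rw [SpecialLinearGroup.SL2Z_generators]; trivial
  induction hγ using Subgroup.closure_induction with
  | mem x hx =>
    intro z
    rcases hx with rfl | rfl
    · rw [UpperHalfPlane.modular_S_smul]
      have : ((UpperHalfPlane.mk (-(z : ℂ))⁻¹ z.im_inv_neg_coe_pos : UpperHalfPlane) : ℂ) = -1 / z := by
        change (-(z : ℂ))⁻¹ = _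
        rw [neg_div, one_div, inv_neg]
      rw [this]
      exact NN_S m hm H hmod z z.im_pos
    · rw [UpperHalfPlane.modular_T_smul]
      have : (((1 : ℝ) +ᵥ z : UpperHalfPlane) : ℂ) = z + 1 := by
        rw [UpperHalfPlane.coe_vadd]; push_cast; ring
      rw [this]
      exact NN_T m hm H hmod z z.im_pos
  | one => intro z; simp
  | mul x y _ _ hx hy => intro z; rw [mul_smul, hx, hy]
  | inv x _ hx =>
    intro z
    rw [← hx (x⁻¹ • z), smul_inv_smul]

lemma exists_red (m : ℕ) (hm : 0 < m) (H : ℤ → ℂ → ℂ)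
    (hmod : ModularLaw 2 m (fun τ z =>
      ∑ l ∈ Finset.range (2 * m), H (l : ℤ) τ * jTheta m (l : ℤ) τ z))
    (τ : ℂ) (hτ : 0 < τ.im) : ∃ c d : ℤ, IsCoprime c d ∧ ∃ τ' : ℂ, τ'.im = τ.im / ‖c * τ + d‖ ^ 2 ∧
      |τ'.re| ≤ 1 / 2 ∧ 1 / 2 ≤ τ'.im ∧ NN m H τ' = NN m H τ := by
  let z : UpperHalfPlane := ⟨τ, hτ⟩
  obtain ⟨γ, hγ⟩ := ModularGroup.exists_smul_mem_fd z
  refine ⟨γ 1 0, γ 1 1, ModularGroup.bottom_row_coprime γ, (γ • z : UpperHalfPlane), ?_, ?_, ?_, ?_⟩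
  · have := ModularGroup.im_smul_eq_div_normSq γ z
    rw [UpperHalfPlane.coe_im, this, ModularGroup.denom_apply, Complex.normSq_eq_norm_sq]
    rfl
  · exact hγ.2
  · have := ModularGroup.three_le_four_mul_im_sq_of_mem_fd hγ
    have h2 := (γ • z).im_pos
    rw [UpperHalfPlane.coe_im]
    nlinarith
  · exact NN_inv m hm H hmod γ z

lemma H_bound (m : ℕ) (hm : 0 < m) (H : ℤ → ℂ → ℂ)
    (hmod : ModularLaw 2 m (fun τ z =>
      ∑ l ∈ Finset.range (2 * m), H (l : ℤ) τ * jTheta m (l : ℤ) τ z)) (a : ℝ) (K : ℝ)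
    (hK : ∀ l : ℕ, l < 2 * m → ∀ τ : ℂ, |τ.re| ≤ 1 / 2 → 1 / 2 ≤ τ.im →
      ‖H l τ‖ ≤ K * Real.exp (a * τ.im)) :
    ∀ τ : ℂ, 0 < τ.im → τ.im ≤ 1 → ∃ c d : ℤ, IsCoprime c d ∧ ∀ l : ℕ, l < 2 * m →
      ‖H l τ‖ ≤ √(2 * m * K ^ 2) * (√(τ.im ^ 3))⁻¹ * Real.exp (a * (τ.im / ‖c * τ + d‖ ^ 2)) := by
  intro τ hτ hτ1
  obtain ⟨c, d, hcd, τ', him, hre, hhalf, hNN⟩ := exists_red m hm H hmod τ hτ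
  refine ⟨c, d, hcd, fun l hl => ?_⟩
  rw [← him]
  set L := ‖c * τ + d‖ with hL
  have hLy : τ.im ≤ L := by
    by_cases hc : c = 0
    · subst hc
      have hd : IsUnit d := isCoprime_zero_left.1 hcd
      have : L = 1 := by
        rcases Int.isUnit_iff.1 hd with h | h <;> simp [hL, h]
      linarith
    · have h1 : |(c * τ + d).im| ≤ L := Complex.abs_im_le_norm _
      have h2 : (c * τ + d).im = c * τ.im := by simp
      rw [h2, abs_mul, abs_of_pos hτ] at h1
      have h3 : (1 : ℝ) ≤ |(c : ℝ)| := by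
        exact_mod_cast Int.one_le_abs hc
      nlinarith
  have hL0 : 0 < L := lt_of_lt_of_le hτ hLy
  set E := Real.exp (a * τ'.im) with hE
  have hE0 : 0 < E := Real.exp_pos _
  have hS : ∑ l ∈ Finset.range (2 * m), ‖H l τ'‖ ^ 2 ≤ 2 * m * K ^ 2 * E ^ 2 := by
    have : ∑ l ∈ Finset.range (2 * m), ‖H l τ'‖ ^ 2 ≤ ∑ l ∈ Finset.range (2 * m), K ^ 2 * E ^ 2 := by
      refine Finset.sum_le_sum fun k hk => ?_
      rw [← mul_pow]
      exact pow_le_pow_left₀ (norm_nonneg _) (hK k (Finset.mem_range.1 hk) τ' hre hhalf) 2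
    refine this.trans (le_of_eq ?_)
    simp; ring
  have hl2 : ‖H l τ‖ ^ 2 ≤ ∑ l ∈ Finset.range (2 * m), ‖H l τ‖ ^ 2 :=
    Finset.single_le_sum (f := fun l : ℕ => ‖H l τ‖ ^ 2) (fun _ _ => by positivity)
      (Finset.mem_range.2 hl)
  have hS0 : 0 ≤ ∑ l ∈ Finset.range (2 * m), ‖H l τ'‖ ^ 2 := Finset.sum_nonneg fun _ _ => by positivity
  have h4 : (∑ l ∈ Finset.range (2 * m), ‖H l τ‖ ^ 2) ^ 2 =
      (∑ l ∈ Finset.range (2 * m), ‖H l τ'‖ ^ 2) ^ 2 / L ^ 6 := by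
    rw [NN, NN, him] at hNN
    have : 0 < τ.im ^ 3 := by positivity
    field_simp at hNN ⊢
    linarith
  have h5 : ∑ l ∈ Finset.range (2 * m), ‖H l τ‖ ^ 2 ≤ (2 * m * K ^ 2 * E ^ 2) / τ.im ^ 3 := by
    apply le_of_sq_le_sq _ (by positivity)
    rw [h4, div_pow, ← pow_mul]
    gcongr
  have h6 : ‖H l τ‖ ^ 2 ≤ (√(2 * m * K ^ 2) * (√(τ.im ^ 3))⁻¹ * E) ^ 2 := by
    rw [mul_pow, mul_pow, inv_pow, Real.sq_sqrt (by positivity), Real.sq_sqrt (by positivity)]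
    refine (hl2.trans h5).trans (le_of_eq ?_)
    ring
  exact le_of_sq_le_sq h6 (by positivity)

lemma h_polar (m : ℕ) (hm : 0 < m) (hl : ℂ → ℂ) (C : ℤ → ℤ → ℂ) (l : ℤ)
    (hOG : ∀ Δ l : ℤ, Δ < -1 → C Δ l = 0)
    (hsum : ∀ τ : ℂ, 0 < τ.im →
      HasSum (fun n : ℤ => C (4 * (m : ℤ) * n - l ^ 2) l *
        ee (((4 * (m : ℤ) * n - l ^ 2 : ℤ) : ℂ) / (4 * (m : ℂ)) * τ)) (hl τ)) :
    ∃ K : ℝ, ∀ τ : ℂ, 1 / 2 ≤ τ.im →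
      ‖hl τ - (if (4 * (m : ℤ)) ∣ (l ^ 2 - 1) then C (-1) l else 0) * ee (-1 / (4 * m) * τ)‖ ≤ K := by
  have hm' : (0 : ℝ) < m := by exact_mod_cast hm
  have hneg : ∀ τ : ℂ, HasSum (fun n : ℤ => if 0 ≤ 4 * (m : ℤ) * n - l ^ 2 then 0 else
      C (4 * (m : ℤ) * n - l ^ 2) l * ee (((4 * (m : ℤ) * n - l ^ 2 : ℤ) : ℂ) / (4 * (m : ℂ)) * τ))
      ((if (4 * (m : ℤ)) ∣ (l ^ 2 - 1) then C (-1) l else 0) * ee (-1 / (4 * m) * τ)) := by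
    intro τ
    split_ifs with hd
    · obtain ⟨n0, hn0⟩ := hd
      have e : 4 * (m : ℤ) * n0 - l ^ 2 = -1 := by linarith
      have := hasSum_single (f := fun n : ℤ => if 0 ≤ 4 * (m : ℤ) * n - l ^ 2 then 0 else
        C (4 * (m : ℤ) * n - l ^ 2) l *
          ee (((4 * (m : ℤ) * n - l ^ 2 : ℤ) : ℂ) / (4 * (m : ℂ)) * τ)) n0 ?_
      · rw [e] at this
        simpa using this
      · intro n hn
        split_ifs with h0
        · rfl
        · rw [hOG, zero_mul]
          rcases lt_or_eq_of_le (show 4 * (m : ℤ) * n - l ^ 2 ≤ -1 by omega) with h1 | h1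
          · exact h1
          · exfalso; apply hn
            have : 4 * (m : ℤ) * n = 4 * m * n0 := by linarith
            exact mul_left_cancel₀ (by positivity) this
    · rw [zero_mul]
      refine Eq.subst (motive := fun f => HasSum f (0 : ℂ)) (funext fun n => ?_) hasSum_zero
      split_ifs with h0
      · rfl
      · rw [hOG, zero_mul]
        rcases lt_or_eq_of_le (show 4 * (m : ℤ) * n - l ^ 2 ≤ -1 by omega) with h1 | h1
        · exact h1
        · exfalso; apply hd
          exact ⟨n, by linarith⟩
  have hpos : ∀ τ : ℂ, 0 < τ.im → HasSum (fun n : ℤ => if 0 ≤ 4 * (m : ℤ) * n - l ^ 2 then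
      C (4 * (m : ℤ) * n - l ^ 2) l * ee (((4 * (m : ℤ) * n - l ^ 2 : ℤ) : ℂ) / (4 * (m : ℂ)) * τ)
      else 0) (hl τ - (if (4 * (m : ℤ)) ∣ (l ^ 2 - 1) then C (-1) l else 0) *
        ee (-1 / (4 * m) * τ)) := by
    intro τ hτ
    refine Eq.subst (motive := fun f => HasSum f _) (funext fun n => ?_) ((hsum τ hτ).sub (hneg τ))
    split_ifs <;> simp
  have him : ∀ (k : ℤ) (τ : ℂ), ((k : ℂ) / (4 * m) * τ).im = k / (4 * m) * τ.im := by
    intro k τ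
    rw [show ((k : ℂ) / (4 * m)) = ((k / (4 * m) : ℝ) : ℂ) by push_cast; rfl, Complex.im_ofReal_mul]
  have hI : 0 < (I / 2 : ℂ).im := by simp
  refine ⟨_, fun τ hτ => (hpos τ (by linarith)).norm_le_of_bounded
    (hpos (I / 2) hI).summable.norm.hasSum ?_⟩
  intro n
  split_ifs with h0
  · rw [norm_mul, norm_mul]
    refine mul_le_mul_of_nonneg_left ?_ (norm_nonneg _)
    rw [norm_ee, norm_ee, him, him, Real.exp_le_exp]
    have h1 : (0:ℝ) ≤ ((4 * (m : ℤ) * n - l ^ 2 : ℤ) : ℝ) / (4 * m) := by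
      have : (0:ℝ) ≤ ((4 * (m : ℤ) * n - l ^ 2 : ℤ) : ℝ) := by exact_mod_cast h0
      positivity
    have h2 : (I / 2 : ℂ).im = 1 / 2 := by simp
    rw [h2]
    have := mul_le_mul_of_nonneg_left hτ h1
    have := Real.pi_pos
    nlinarith
  · simp

lemma g_bdd (g : ℂ → ℂ) (hghol : ∀ τ : ℂ, 0 < τ.im → DifferentiableAt ℂ g τ)
    (hgbdd : ∃ B : ℝ, ∀ τ : ℂ, 1 ≤ τ.im → ‖g τ‖ ≤ B) (δ A R : ℝ) (hδ : 0 < δ) :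
    ∃ B : ℝ, 0 ≤ B ∧ ∀ ζ : ℂ, (1 ≤ ζ.im ∨ (A ≤ ζ.re ∧ ζ.re ≤ R ∧ δ ≤ ζ.im)) → ‖g ζ‖ ≤ B := by
  obtain ⟨B, hB⟩ := hgbdd
  have hc : IsCompact (Set.Icc A R ×ℂ Set.Icc δ 1) := isCompact_Icc.reProdIm isCompact_Icc
  obtain ⟨B', hB'⟩ := hc.exists_bound_of_continuousOn (f := g) (fun ζ hζ =>
    (hghol ζ (lt_of_lt_of_le hδ (Complex.mem_reProdIm.1 hζ).2.1)).continuousAt.continuousWithinAt)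
  refine ⟨max 0 (max B B'), le_max_left _ _, fun ζ hζ => ?_⟩
  by_cases h1 : 1 ≤ ζ.im
  · exact (hB ζ h1).trans ((le_max_left _ _).trans (le_max_right _ _))
  · rcases hζ with h | ⟨ha, hr, hd⟩
    · exact absurd h h1
    · refine (hB' ζ (Complex.mem_reProdIm.2 ⟨⟨ha, hr⟩, hd, (not_le.1 h1).le⟩)).trans
        ((le_max_right _ _).trans (le_max_right _ _))

/-- kernel -/
def ww (y t : ℝ) : ℂ := (I * (2 * y + t)) ^ (-(3 : ℂ) / 2)

lemma norm_ww (y t : ℝ) (h : 0 < 2 * y + t) : ‖ww y t‖ = (2 * y + t) ^ (-(3 : ℝ) / 2) := by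
  rw [ww, show (-(3 : ℂ) / 2) = ((-(3 : ℝ) / 2 : ℝ) : ℂ) by push_cast; rfl, Complex.norm_cpow_real]
  congr 1
  rw [norm_mul, Complex.norm_I, one_mul, show (2 * (y : ℂ) + t) = ((2 * y + t : ℝ) : ℂ) by push_cast; rfl,
    Complex.norm_real, Real.norm_of_nonneg h.le]

lemma ww_meas (y : ℝ) : Measurable (ww y) := by
  unfold ww
  fun_prop

lemma ww_int (y : ℝ) (hy : 0 < y) :
    IntegrableOn (fun t : ℝ => (2 * y + t) ^ (-(3 : ℝ) / 2)) (Set.Ioi 0) := by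
  have := integrableOn_add_rpow_Ioi_of_lt (a := -(3:ℝ)/2) (m := 2 * y) (c := 0) (by norm_num) (by linarith)
  simpa [add_comm] using this

/-- holomorphic version of Eichler integral -/
def QQ (g : ℂ → ℂ) (y : ℝ) (ζ : ℂ) : ℂ :=
  ∫ t in Set.Ioi (0 : ℝ), (starRingEnd ℂ) (ww y t) * g (ζ + I * t)

lemma eich_eq (g : ℂ → ℂ) (τ : ℂ) : eich g τ =
    (I / (2 * (Real.pi : ℂ))) ^ ((1 : ℂ) / 2) * I * (starRingEnd ℂ) (QQ g τ.im τ) := by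
  rw [eich, QQ, ← integral_conj, mul_assoc, ← integral_const_mul I]
  congr 1
  apply integral_congr_ae
  refine Eventually.of_forall fun t => ?_
  have : -(starRingEnd ℂ) τ + I * (t : ℂ) + τ = I * (2 * (τ.im : ℂ) + t) := by
    apply Complex.ext
    · simp
    · simp
      ring
  simp only [map_mul, Complex.conj_conj, ww, this]
  ring

lemma QQ_bound (g : ℂ → ℂ) (y y0 : ℝ) (hy0 : 0 < y0) (hy : y0 ≤ y) (ζ : ℂ) (B : ℝ)
    (hB : ∀ t : ℝ, 0 < t → ‖g (ζ + I * t)‖ ≤ B) :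
    ‖QQ g y ζ‖ ≤ ∫ t in Set.Ioi (0 : ℝ), (2 * y0 + t) ^ (-(3 : ℝ) / 2) * B := by
  refine norm_integral_le_of_norm_le ((ww_int y0 hy0).mul_const B) ?_
  refine (ae_restrict_iff' measurableSet_Ioi).2 (Eventually.of_forall fun t ht => ?_)
  have ht : 0 < t := ht
  rw [norm_mul, RCLike.norm_conj, norm_ww y t (by linarith)]
  refine mul_le_mul ?_ (hB t ht) (norm_nonneg _) (Real.rpow_nonneg (by linarith) _)
  exact Real.rpow_le_rpow_of_nonpos (by linarith) (by linarith) (by norm_num)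

lemma eich_bound (g : ℂ → ℂ) (hghol : ∀ τ : ℂ, 0 < τ.im → DifferentiableAt ℂ g τ)
    (hgbdd : ∃ B : ℝ, ∀ τ : ℂ, 1 ≤ τ.im → ‖g τ‖ ≤ B) :
    ∃ K : ℝ, ∀ τ : ℂ, (1 ≤ τ.im ∨ (|τ.re| ≤ 1 / 2 ∧ 1 / 2 ≤ τ.im)) → ‖eich g τ‖ ≤ K := by
  obtain ⟨B, hB0, hB⟩ := g_bdd g hghol hgbdd (1 / 2) (-(1 / 2)) (1 / 2) (by norm_num)
  refine ⟨‖(I / (2 * (Real.pi : ℂ))) ^ ((1 : ℂ) / 2) * I‖ *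
    ∫ t in Set.Ioi (0 : ℝ), (2 * (1/2) + t) ^ (-(3 : ℝ) / 2) * B, fun τ hτ => ?_⟩
  rw [eich_eq, norm_mul, RCLike.norm_conj]
  refine mul_le_mul_of_nonneg_left (QQ_bound g τ.im (1/2) (by norm_num) ?_ τ B ?_) (norm_nonneg _)
  · rcases hτ with h | h
    · linarith
    · exact h.2
  · intro t ht
    apply hB
    have h1 : (τ + I * t).im = τ.im + t := by simp
    have h2 : (τ + I * t).re = τ.re := by simp
    rw [h1, h2]
    rcases hτ with h | h
    · left; linarith
    · right
      have := abs_le.1 h.1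
      exact ⟨this.1, this.2, by linarith⟩

lemma QQ_diff (g : ℂ → ℂ) (hghol : ∀ τ : ℂ, 0 < τ.im → DifferentiableAt ℂ g τ)
    (hgbdd : ∃ B : ℝ, ∀ τ : ℂ, 1 ≤ τ.im → ‖g τ‖ ≤ B) (y : ℝ) (hy : 0 < y) (ζ0 : ℂ)
    (hζ0 : 0 < ζ0.im) : DifferentiableAt ℂ (QQ g y) ζ0 := by
  set ε := ζ0.im / 4 with hε
  have hε0 : 0 < ε := by positivity
  obtain ⟨B, hB0, hB⟩ := g_bdd g hghol hgbdd (ζ0.im / 2) (ζ0.re - 2 * ε) (ζ0.re + 2 * ε)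
    (by positivity)
  have hIt : ∀ t : ℝ, (I * (t : ℂ)).im = t ∧ (I * (t : ℂ)).re = 0 := by intro t; simp
  have hball : ∀ ζ ∈ Metric.ball ζ0 ε, ∀ t : ℝ, 0 < t → ∀ ξ ∈ Metric.closedBall (ζ + I * t) ε,
      0 < ξ.im ∧ ‖g ξ‖ ≤ B := by
    intro ζ hζ t ht ξ hξ
    rw [Metric.mem_ball, dist_eq_norm] at hζ
    rw [Metric.mem_closedBall, dist_eq_norm] at hξ
    have h1 := abs_le.1 ((Complex.abs_im_le_norm _).trans hζ.le)
    have h2 := abs_le.1 ((Complex.abs_re_le_norm _).trans hζ.le)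
    have h3 := abs_le.1 ((Complex.abs_im_le_norm _).trans hξ)
    have h4 := abs_le.1 ((Complex.abs_re_le_norm _).trans hξ)
    simp only [Complex.sub_im, Complex.sub_re, Complex.add_im, Complex.add_re, (hIt t).1,
      (hIt t).2] at h1 h2 h3 h4
    refine ⟨by linarith [h1.1, h3.1], hB ξ (Or.inr ⟨?_, ?_, ?_⟩)⟩
    · linarith [h2.1, h4.1]
    · linarith [h2.2, h4.2]
    · linarith [h1.1, h3.1]
  have hmeas : ∀ ζ ∈ Metric.ball ζ0 ε, AEStronglyMeasurable
      (fun t : ℝ => (starRingEnd ℂ) (ww y t) * g (ζ + I * t)) (volume.restrict (Set.Ioi 0)) := by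
    intro ζ hζ
    refine AEStronglyMeasurable.mul ?_ ?_
    · exact (Complex.continuous_conj.measurable.comp (ww_meas y)).aestronglyMeasurable
    · refine ContinuousOn.aestronglyMeasurable (fun t ht => ?_) measurableSet_Ioi
      have := (hball ζ hζ t ht _ (Metric.mem_closedBall_self hε0.le)).1
      refine ContinuousAt.continuousWithinAt ?_
      exact ContinuousAt.comp (f := fun t : ℝ => ζ + I * (t : ℂ)) (hghol _ this).continuousAt
        (by fun_prop)
  have key := hasDerivAt_integral_of_dominated_loc_of_deriv_le (μ := volume.restrict (Set.Ioi (0:ℝ)))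
    (F := fun (ζ : ℂ) (t : ℝ) => (starRingEnd ℂ) (ww y t) * g (ζ + I * t))
    (F' := fun (ζ : ℂ) (t : ℝ) => (starRingEnd ℂ) (ww y t) * deriv g (ζ + I * t))
    (x₀ := ζ0) (s := Metric.ball ζ0 ε)
    (bound := fun t => (2 * y + t) ^ (-(3 : ℝ) / 2) * (B / ε)) (Metric.ball_mem_nhds _ hε0)
    (by
      filter_upwards [Metric.ball_mem_nhds ζ0 hε0] with ζ hζ
      exact hmeas ζ hζ)
    (by
      refine Integrable.mono' ((ww_int y hy).mul_const B) (hmeas ζ0 (Metric.mem_ball_self hε0)) ?_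
      refine (ae_restrict_iff' measurableSet_Ioi).2 (Eventually.of_forall fun t ht => ?_)
      have ht : 0 < t := ht
      rw [norm_mul, RCLike.norm_conj, norm_ww y t (by linarith)]
      refine mul_le_mul_of_nonneg_left ?_ (Real.rpow_nonneg (by linarith) _)
      exact (hball ζ0 (Metric.mem_ball_self hε0) t ht _ (Metric.mem_closedBall_self hε0.le)).2)
    (by
      refine AEStronglyMeasurable.mul ?_ ?_
      · exact (Complex.continuous_conj.measurable.comp (ww_meas y)).aestronglyMeasurable
      · refine Measurable.aestronglyMeasurable ?_
        exact (measurable_deriv g).comp (by fun_prop))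
    (by
      refine (ae_restrict_iff' measurableSet_Ioi).2 (Eventually.of_forall fun t ht ζ hζ => ?_)
      have ht : 0 < t := ht
      rw [norm_mul, RCLike.norm_conj, norm_ww y t (by linarith)]
      refine mul_le_mul_of_nonneg_left ?_ (Real.rpow_nonneg (by linarith) _)
      refine Complex.norm_deriv_le_of_forall_mem_sphere_norm_le hε0 ?_ ?_
      · refine DifferentiableOn.diffContOnCl fun ξ hξ => ?_
        have := hball ζ hζ t ht ξ (Metric.closure_ball_subset_closedBall hξ)
        exact (hghol ξ this.1).differentiableWithinAt
      · intro ξ hξ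
        exact (hball ζ hζ t ht ξ (Metric.sphere_subset_closedBall hξ)).2)
    ((ww_int y hy).mul_const _)
    (by
      refine (ae_restrict_iff' measurableSet_Ioi).2 (Eventually.of_forall fun t ht ζ hζ => ?_)
      have h1 := (hball ζ hζ t ht _ (Metric.mem_closedBall_self hε0.le)).1
      have h2 : HasDerivAt (fun ζ : ℂ => ζ + I * (t : ℂ)) 1 ζ := (hasDerivAt_id ζ).add_const _
      have h3 := (hghol _ h1).hasDerivAt.comp ζ h2
      rw [mul_one] at h3
      exact h3.const_mul _)
  exact key.2.differentiableAt

lemma line_zero (R : ℂ → ℂ) (hR : ∀ ζ : ℂ, 0 < ζ.im → DifferentiableAt ℂ R ζ) (y : ℝ) (hy : 0 < y)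
    (hper : ∀ x : ℝ, R (x + y * I + 1) = R (x + y * I))
    (K b : ℝ) (hb : 0 < b) (hK : ∀ ζ : ℂ, 1 ≤ ζ.im → ‖R ζ‖ ≤ K * Real.exp (-(b * ζ.im))) :
    ∫ x in (-(1/2) : ℝ)..(1/2), R (x + y * I) = 0 := by
  have hopen : IsOpen {ζ : ℂ | 0 < ζ.im} := isOpen_lt continuous_const Complex.continuous_im
  have hper' : ∀ ζ : ℂ, 0 < ζ.im → R (ζ + 1) = R ζ := by
    have h1 : AnalyticOnNhd ℂ R {ζ : ℂ | 0 < ζ.im} :=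
      DifferentiableOn.analyticOnNhd (fun ζ hζ => (hR ζ hζ).differentiableWithinAt) hopen
    have h2 : AnalyticOnNhd ℂ (fun ζ => R (ζ + 1)) {ζ : ℂ | 0 < ζ.im} := by
      refine DifferentiableOn.analyticOnNhd (fun ζ hζ => DifferentiableAt.differentiableWithinAt ?_)
        hopen
      have hζ : 0 < ζ.im := hζ
      exact DifferentiableAt.comp (f := fun ζ : ℂ => ζ + 1) ζ (hR (ζ + 1) (by simpa using hζ))
        (by fun_prop)
    have hconv : IsPreconnected {ζ : ℂ | 0 < ζ.im} := (convex_halfSpace_im_gt 0).isPreconnected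
    have h3 := h2.eqOn_of_preconnected_of_frequently_eq h1 hconv (z₀ := y * I) (by simpa using hy) ?_
    · exact fun ζ hζ => h3 hζ
    · have ht : Tendsto (fun x : ℝ => (x : ℂ) + y * I) (𝓝[≠] 0) (𝓝[≠] (y * I)) := by
        refine tendsto_nhdsWithin_iff.2 ⟨?_, ?_⟩
        · have : ContinuousAt (fun x : ℝ => (x : ℂ) + y * I) 0 := by fun_prop
          have h4 := this.tendsto
          simp only [Complex.ofReal_zero, zero_add] at h4
          exact h4.mono_left nhdsWithin_le_nhds
        · filter_upwards [self_mem_nhdsWithin] with x hx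
          simpa using hx
      exact ht.frequently (Frequently.of_forall hper)
  have hconst : ∀ u : ℝ, 0 < u → ∫ x in (-(1/2) : ℝ)..(1/2), R (x + y * I) =
      ∫ x in (-(1/2) : ℝ)..(1/2), R (x + u * I) := by
    intro u hu
    have h := Complex.integral_boundary_rect_eq_zero_of_differentiableOn R
      (((-(1/2) : ℝ) : ℂ) + y * I) (((1/2 : ℝ) : ℂ) + u * I) ?_
    · have e1 : (((-(1/2) : ℝ) : ℂ) + y * I).re = -(1/2) := by simp
      have e2 : (((-(1/2) : ℝ) : ℂ) + y * I).im = y := by simp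
      have e3 : (((1/2 : ℝ) : ℂ) + u * I).re = 1/2 := by simp
      have e4 : (((1/2 : ℝ) : ℂ) + u * I).im = u := by simp
      rw [e1, e2, e3, e4] at h
      have h5 : ∫ t in y..u, R (((1/2 : ℝ) : ℂ) + t * I) = ∫ t in y..u, R (((-(1/2) : ℝ) : ℂ) + t * I) := by
        refine intervalIntegral.integral_congr fun t ht => ?_
        have ht0 : 0 < t := by
          have := ht.1
          exact lt_of_lt_of_le (lt_min hy hu) this
        have := hper' (((-(1/2) : ℝ) : ℂ) + t * I) (by simpa using ht0)
        rw [← this]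
        congr 1
        push_cast
        ring
      rw [h5, add_sub_cancel_right] at h
      exact sub_eq_zero.1 h
    · intro ζ hζ
      refine (hR ζ ?_).differentiableWithinAt
      have := (Complex.mem_reProdIm.1 hζ).2.1
      simp only [Complex.add_im, Complex.ofReal_im, Complex.mul_im, Complex.ofReal_re, Complex.I_im,
        Complex.I_re, mul_one, mul_zero, add_zero, zero_add] at this
      exact lt_of_lt_of_le (lt_min hy hu) this
  have hlim : Tendsto (fun u : ℝ => K * Real.exp (-(b * u))) atTop (𝓝 0) := by
    have : Tendsto (fun u : ℝ => Real.exp (-(b * u))) atTop (𝓝 0) :=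
      Real.tendsto_exp_neg_atTop_nhds_zero.comp (tendsto_id.const_mul_atTop hb)
    simpa using this.const_mul K
  have hle : ‖∫ x in (-(1/2) : ℝ)..(1/2), R (x + y * I)‖ ≤ 0 := by
    refine ge_of_tendsto hlim ?_
    filter_upwards [eventually_ge_atTop 1] with u hu
    rw [hconst u (by linarith)]
    have := intervalIntegral.norm_integral_le_of_norm_le_const (a := -(1/2)) (b := 1/2)
      (f := fun x : ℝ => R (x + u * I)) (C := K * Real.exp (-(b * u))) (fun x _ => by
        have := hK (x + u * I) (by simpa using hu)
        simpa using this)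
    refine this.trans (le_of_eq ?_)
    norm_num
  exact norm_le_zero_iff.1 hle

lemma eich_coeff (m : ℕ) (hm : 0 < m) (g : ℂ → ℂ)
    (hghol : ∀ τ : ℂ, 0 < τ.im → DifferentiableAt ℂ g τ)
    (hgbdd : ∃ B : ℝ, ∀ τ : ℂ, 1 ≤ τ.im → ‖g τ‖ ≤ B) (r Δ : ℤ) (hΔ : 0 < Δ)
    (hd : (4 * (m : ℤ)) ∣ (Δ + r ^ 2))
    (hT : ∀ τ : ℂ, 0 < τ.im → eich g (τ + 1) * ee ((r : ℂ) ^ 2 / (4 * m)) = eich g τ)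
    (y : ℝ) (hy : 0 < y) :
    ∫ x in (-(1/2) : ℝ)..(1/2), eich g (x + y * I) * ee (-(Δ / (4 * m) * (x + y * I))) = 0 := by
  have hm' : (0 : ℝ) < m := by exact_mod_cast hm
  have hm0 : (m : ℂ) ≠ 0 := by exact_mod_cast hm.ne'
  set c0 : ℂ := (I / (2 * (Real.pi : ℂ))) ^ ((1 : ℂ) / 2) * I with hc0
  have hc0' : c0 ≠ 0 := by
    rw [hc0]
    refine mul_ne_zero ?_ I_ne_zero
    have : I / (2 * (Real.pi : ℂ)) ≠ 0 := by simp [Real.pi_ne_zero]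
    simp [this]
  have hconj : ∀ x : ℂ, (starRingEnd ℂ) (ee x) = ee (-(starRingEnd ℂ) x) := by
    intro x
    rw [ee, ee, ← Complex.exp_conj]
    congr 1
    simp only [map_mul, Complex.conj_ofNat, Complex.conj_ofReal, Complex.conj_I]
    ring
  have him : ∀ x : ℝ, ((x : ℂ) + y * I).im = y := by intro x; simp
  have himΔ : ∀ τ : ℂ, ((Δ : ℂ) / (4 * m) * τ).im = Δ / (4 * m) * τ.im := by
    intro τ
    rw [show ((Δ : ℂ) / (4 * m)) = ((Δ / (4 * m) : ℝ) : ℂ) by push_cast; rfl, Complex.im_ofReal_mul]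
  have hΔ' : (0 : ℝ) < Δ := by exact_mod_cast hΔ
  obtain ⟨B, hB⟩ := hgbdd
  have h0 := line_zero (fun ζ => QQ g y ζ * ee (Δ / (4 * m) * ζ)) ?_ y hy ?_
    (∫ t in Set.Ioi (0 : ℝ), (2 * y + t) ^ (-(3 : ℝ) / 2) * B) (2 * Real.pi * (Δ / (4 * m)))
    (by have := Real.pi_pos; positivity) ?_
  · have e : ∀ x : ℝ, eich g (x + y * I) * ee (-(Δ / (4 * m) * (x + y * I))) =
        c0 * ee (-(Δ / (4 * m) * (2 * y * I))) *
          (starRingEnd ℂ) (QQ g y (x + y * I) * ee (Δ / (4 * m) * (x + y * I))) := by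
      intro x
      rw [eich_eq, him, map_mul, hconj, ← hc0]
      rw [show -(↑Δ / (4 * ↑m) * ((x : ℂ) + ↑y * I)) = -(Δ / (4 * m) * (2 * y * I)) +
        -(starRingEnd ℂ) (Δ / (4 * m) * (x + y * I)) by
          simp only [map_mul, map_add, map_div₀, Complex.conj_ofNat, Complex.conj_ofReal,
            Complex.conj_I, map_natCast, map_intCast]
          ring, ee_add]
      ring
    simp_rw [e]
    rw [intervalIntegral.integral_const_mul]
    have h1 : ∫ x in (-(1/2) : ℝ)..(1/2), (starRingEnd ℂ) (QQ g y (x + y * I) *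
        ee (Δ / (4 * m) * (x + y * I))) = 0 := by
      rw [intervalIntegral.intervalIntegral_eq_integral_uIoc] at h0 ⊢
      rw [integral_conj]
      have h2 : (if (-(1/2) : ℝ) ≤ 1/2 then (1:ℝ) else -1) ≠ 0 := by split_ifs <;> norm_num
      rw [(smul_eq_zero.1 h0).resolve_left h2]
      simp
    rw [h1, mul_zero]
  · intro ζ hζ
    refine (QQ_diff g hghol ⟨B, hB⟩ y hy ζ hζ).mul ?_
    unfold ee
    fun_prop
  · intro x
    have h1 := hT (x + y * I) (by rw [him]; exact hy)
    rw [eich_eq, eich_eq, ← hc0, mul_assoc] at h1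
    have h2 := mul_left_cancel₀ hc0' h1
    have h3 : ((x : ℂ) + y * I + 1).im = y := by simp
    rw [h3, him] at h2
    have h4 := congrArg (starRingEnd ℂ) h2
    rw [map_mul, Complex.conj_conj, Complex.conj_conj, hconj] at h4
    rw [← h4, mul_assoc]
    congr 1
    rw [← ee_add]
    obtain ⟨n, hn⟩ := hd
    have hone : ∀ X : ℂ, ee X = ee (X + n) := fun X => by rw [ee_add, ee_int, mul_one]
    rw [hone (-(starRingEnd ℂ) _ + _)]
    congr 1
    have hn' : (Δ : ℂ) + r ^ 2 = 4 * m * n := by exact_mod_cast hn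
    simp only [map_pow, map_mul, map_div₀, Complex.conj_ofNat, map_natCast, map_intCast]
    have : (Δ : ℂ) = 4 * m * n - r ^ 2 := by linear_combination hn'
    rw [this]
    field_simp
    ring
  · intro ζ hζ
    rw [norm_mul, norm_ee, himΔ]
    refine mul_le_mul ?_ (le_of_eq ?_) (Real.exp_pos _).le ?_
    · refine QQ_bound g y y hy le_rfl ζ B fun t ht => hB _ ?_
      have : (ζ + I * t).im = ζ.im + t := by simp
      rw [this]; linarith
    · congr 1; ring
    · refine setIntegral_nonneg measurableSet_Ioi fun t ht => ?_
      have ht : 0 < t := ht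
      have hB0 : 0 ≤ B := (norm_nonneg _).trans (hB ζ hζ)
      exact mul_nonneg (Real.rpow_nonneg (by linarith) _) hB0

lemma eich_cont (g : ℂ → ℂ) (hghol : ∀ τ : ℂ, 0 < τ.im → DifferentiableAt ℂ g τ)
    (hgbdd : ∃ B : ℝ, ∀ τ : ℂ, 1 ≤ τ.im → ‖g τ‖ ≤ B) (y : ℝ) (hy : 0 < y) :
    Continuous (fun x : ℝ => eich g (x + y * I)) := by
  have him : ∀ x : ℝ, ((x : ℂ) + y * I).im = y := by intro x; simp
  simp_rw [eich_eq, him]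
  refine continuous_const.mul (Complex.continuous_conj.comp ?_)
  refine continuous_iff_continuousAt.2 fun x => ?_
  exact ContinuousAt.comp (f := fun x : ℝ => (x : ℂ) + y * I)
    (QQ_diff g hghol hgbdd y hy _ (by rw [him]; exact hy)).continuousAt (by fun_prop)

lemma h_T (m : ℕ) (hm : 0 < m) (hl : ℂ → ℂ) (C : ℤ → ℤ → ℂ) (l : ℤ)
    (hsum : ∀ τ : ℂ, 0 < τ.im →
      HasSum (fun n : ℤ => C (4 * (m : ℤ) * n - l ^ 2) l *
        ee (((4 * (m : ℤ) * n - l ^ 2 : ℤ) : ℂ) / (4 * (m : ℂ)) * τ)) (hl τ))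
    (τ : ℂ) (hτ : 0 < τ.im) : hl (τ + 1) * ee ((l : ℂ) ^ 2 / (4 * m)) = hl τ := by
  have hm0 : (m : ℂ) ≠ 0 := by exact_mod_cast hm.ne'
  have h1 := (hsum (τ + 1) (by simpa using hτ)).mul_right (ee ((l : ℂ) ^ 2 / (4 * m)))
  refine HasSum.unique h1 ?_
  refine Eq.subst (motive := fun f => HasSum f _) (funext fun n => ?_) (hsum τ hτ)
  rw [mul_assoc (C _ _), ← ee_add]
  congr 1
  have hone : ∀ X : ℂ, ee X = ee (X + n) := fun X => by rw [ee_add, ee_int, mul_one]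
  rw [hone (_ * τ)]
  congr 1
  push_cast
  field_simp
  ring

lemma coeff_int (m : ℕ) (hm : 0 < m)
    (h g : ℤ → ℂ → ℂ) (C : ℤ → ℤ → ℂ)
    (hhol : ∀ l : ℤ, ∀ τ : ℂ, 0 < τ.im → DifferentiableAt ℂ (h l) τ)
    (hsum : ∀ l : ℤ, ∀ τ : ℂ, 0 < τ.im →
      HasSum (fun n : ℤ => C (4 * (m : ℤ) * n - l ^ 2) l *
        ee (((4 * (m : ℤ) * n - l ^ 2 : ℤ) : ℂ) / (4 * (m : ℂ)) * τ)) (h l τ))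
    (hghol : ∀ l : ℤ, ∀ τ : ℂ, 0 < τ.im → DifferentiableAt ℂ (g l) τ)
    (hgbdd : ∀ l : ℤ, ∃ B : ℝ, ∀ τ : ℂ, 1 ≤ τ.im → ‖g l τ‖ ≤ B)
    (hmod : ModularLaw 2 m (fun τ z =>
      ∑ l ∈ Finset.range (2 * m), (h (l : ℤ) τ + eich (g (l : ℤ)) τ) * jTheta m (l : ℤ) τ z))
    (k : ℕ) (hk : k < 2 * m) (Δ : ℤ) (hΔ : 0 < Δ) (hd : (4 * (m : ℤ)) ∣ (Δ + (k : ℤ) ^ 2))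
    (y : ℝ) (hy : 0 < y) :
    Continuous (fun x : ℝ => (h k (x + y * I) + eich (g k) (x + y * I)) *
      ee (-(Δ / (4 * m) * (x + y * I)))) ∧
    ∫ x in (-(1/2) : ℝ)..(1/2), (h k (x + y * I) + eich (g k) (x + y * I)) *
      ee (-(Δ / (4 * m) * (x + y * I))) = C Δ k := by
  have hm0 : (m : ℂ) ≠ 0 := by exact_mod_cast hm.ne'
  have him : ∀ x : ℝ, ((x : ℂ) + y * I).im = y := by intro x; simp
  have hec : Continuous (fun x : ℝ => ee (-(Δ / (4 * m) * (x + y * I)))) :=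
    ee_cont.comp (by fun_prop)
  have c1 : Continuous (fun x : ℝ => h k (x + y * I) * ee (-(Δ / (4 * m) * (x + y * I)))) := by
    refine Continuous.mul ?_ hec
    refine continuous_iff_continuousAt.2 fun x => ?_
    exact ContinuousAt.comp (f := fun x : ℝ => (x : ℂ) + y * I)
      (hhol k _ (by rw [him]; exact hy)).continuousAt (by fun_prop)
  have c2 : Continuous (fun x : ℝ => eich (g k) (x + y * I) * ee (-(Δ / (4 * m) * (x + y * I)))) :=
    (eich_cont (g k) (hghol k) (hgbdd k) y hy).mul hec
  refine ⟨(c1.add c2).congr fun x => (add_mul _ _ _).symm, ?_⟩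
  simp_rw [add_mul]
  rw [intervalIntegral.integral_add (c1.intervalIntegrable _ _) (c2.intervalIntegrable _ _)]
  have hT : ∀ τ : ℂ, 0 < τ.im → eich (g k) (τ + 1) * ee (((k : ℤ) : ℂ) ^ 2 / (4 * m)) =
      eich (g k) τ := by
    intro τ hτ
    have h1 := h_T m hm (h k) C k (hsum k) τ hτ
    have h2 := H_T m hm (fun l τ => h l τ + eich (g l) τ) hmod k hk τ hτ
    simp only [Int.cast_natCast] at h1 h2 ⊢
    linear_combination h2 - h1
  rw [eich_coeff m hm (g k) (hghol k) (hgbdd k) k Δ hΔ hd hT y hy, add_zero]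
  obtain ⟨j, hj⟩ := hd
  have hΔj : Δ = 4 * m * j - (k : ℤ) ^ 2 := by linarith
  have hsx : ∀ x : ℝ, HasSum (fun n : ℤ => (C (4 * (m : ℤ) * n - (k : ℤ) ^ 2) k *
      ee ((n - j : ℤ) * (y * I))) * ee ((n - j : ℤ) * x))
      (h k (x + y * I) * ee (-(Δ / (4 * m) * (x + y * I)))) := by
    intro x
    have h1 := (hsum k (x + y * I) (by rw [him]; exact hy)).mul_right
      (ee (-(Δ / (4 * m) * (x + y * I))))
    refine Eq.subst (motive := fun f => HasSum f _) (funext fun n => ?_) h1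
    rw [mul_assoc (C _ _), mul_assoc (C _ _), ← ee_add, ← ee_add]
    congr 2
    rw [hΔj]
    push_cast
    field_simp
    ring
  have hs0 : Summable (fun n : ℤ => C (4 * (m : ℤ) * n - (k : ℤ) ^ 2) k *
      ee ((n - j : ℤ) * (y * I))) := by
    refine (hsx 0).summable.congr fun n => ?_
    simp [ee_zero]
  rw [integral_fourier _ (fun n : ℤ => n - j) _ hs0 hsx, tsum_eq_single j]
  · simp [ee_zero, hΔj]
  · intro n hn
    rw [if_neg (by omega)]

/-- The main-term function. -/
def MM (a : ℝ) (s : ℂ) : ℂ := cexp (a / s) / (s * s ^ ((1 : ℂ) / 2))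

lemma half_cpow_re (ρ : ℝ) (hρ : 0 < ρ) (s : ℂ) (hs : 0 < s.re) :
    ((ρ : ℂ) / s) ^ ((1 : ℂ) / 2) = (Real.sqrt ρ : ℂ) / s ^ ((1 : ℂ) / 2) := by
  have hs0 : s ≠ 0 := by rintro rfl; simp at hs
  have harg : s.arg ≠ Real.pi := by
    intro h
    have := (Complex.arg_eq_pi_iff.1 h).1
    linarith
  have hpi : ((Real.sqrt ρ : ℝ) : ℂ) = (ρ : ℂ) ^ ((1 : ℂ) / 2) := by
    rw [Real.sqrt_eq_rpow, Complex.ofReal_cpow hρ.le]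
    norm_num
  rw [hpi, div_eq_mul_inv, div_eq_mul_inv (_ ^ _), ← Complex.inv_cpow _ _ harg,
    Complex.cpow_def_of_ne_zero (mul_ne_zero (by exact_mod_cast hρ.ne') (inv_ne_zero hs0)),
    Complex.cpow_def_of_ne_zero (by exact_mod_cast hρ.ne'),
    Complex.cpow_def_of_ne_zero (inv_ne_zero hs0), ← Complex.exp_add,
    Complex.log_ofReal_mul hρ (inv_ne_zero hs0), Complex.ofReal_log hρ.le]
  congr 1
  ring

lemma gauss_moment_int (s c : ℂ) (hs : 0 < s.re) :
    Integrable (fun u : ℝ => (u : ℂ) * cexp (-s * u ^ 2 + c * u)) := by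
  have h1 := (integrable_cexp_quadratic hs (c + 1) 0).norm
  have h2 := (integrable_cexp_quadratic hs (c - 1) 0).norm
  refine Integrable.mono' (h1.add h2) ?_ (Eventually.of_forall fun u => ?_)
  · exact (by fun_prop : Continuous (fun u : ℝ => (u : ℂ) * cexp (-s * u ^ 2 + c * u))).aestronglyMeasurable
  · have e1 : cexp (-s * u ^ 2 + (c + 1) * u + 0) = cexp (-s * u ^ 2 + c * u) * cexp (u : ℂ) := by
      rw [← Complex.exp_add]; congr 1; ring
    have e2 : cexp (-s * u ^ 2 + (c - 1) * u + 0) = cexp (-s * u ^ 2 + c * u) * cexp ((-u : ℝ) : ℂ) := by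
      rw [← Complex.exp_add]; congr 1; push_cast; ring
    simp only [Pi.add_apply]
    rw [e1, e2, norm_mul, norm_mul, norm_mul, ← Complex.ofReal_exp, ← Complex.ofReal_exp,
      Complex.norm_real, Complex.norm_real, Complex.norm_real, Real.norm_eq_abs, Real.norm_eq_abs,
      Real.norm_eq_abs, abs_of_pos (Real.exp_pos _), abs_of_pos (Real.exp_pos _), ← mul_add, mul_comm]
    refine mul_le_mul_of_nonneg_left ?_ (norm_nonneg _)
    refine abs_le.2 ⟨?_, ?_⟩
    · linarith [Real.add_one_le_exp (-u), Real.exp_pos u]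
    · linarith [Real.add_one_le_exp u, Real.exp_pos (-u)]

lemma gauss_moment (s c : ℂ) (hs : 0 < s.re) :
    ∫ u : ℝ, (u : ℂ) * cexp (-s * u ^ 2 + c * u) =
      c / (2 * s) * (((Real.pi : ℂ) / s) ^ ((1 : ℂ) / 2) * cexp (c ^ 2 / (4 * s))) := by
  have hs0 : s ≠ 0 := by rintro rfl; simp at hs
  have hG := gauss_moment_int s c hs
  have hE : Integrable (fun u : ℝ => cexp (-s * u ^ 2 + c * u)) := by
    simpa using integrable_cexp_quadratic hs c 0
  have hI : ∫ u : ℝ, cexp (-s * u ^ 2 + c * u) =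
      ((Real.pi : ℂ) / s) ^ ((1 : ℂ) / 2) * cexp (c ^ 2 / (4 * s)) := by
    have := integral_cexp_quadratic (b := -s) (by simpa using hs) c 0
    simp only [add_zero, neg_neg, zero_sub] at this
    rw [this]
    congr 2
    field_simp
  have hd : ∀ u : ℝ, HasDerivAt (fun u : ℝ => cexp (-s * u ^ 2 + c * u))
      (-(2 * s) * ((u : ℂ) * cexp (-s * u ^ 2 + c * u)) + c * cexp (-s * u ^ 2 + c * u)) u := by
    intro u
    have h1 : HasDerivAt (fun z : ℂ => cexp (-s * z ^ 2 + c * z))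
        (cexp (-s * u ^ 2 + c * u) * (-s * (2 * u) + c)) (u : ℂ) := by
      have h2 : HasDerivAt (fun z : ℂ => -s * z ^ 2 + c * z) (-s * (2 * u) + c) (u : ℂ) := by
        have h3 := ((hasDerivAt_pow 2 (u : ℂ)).const_mul (-s)).add
          ((hasDerivAt_id (u : ℂ)).const_mul c)
        rw [mul_one] at h3
        refine HasDerivAt.congr_deriv h3 ?_
        simp
      exact h2.cexp
    have h4 := h1.comp_ofReal
    convert h4 using 1
    ring
  have h0 := integral_eq_zero_of_hasDerivAt_of_integrable hd
    ((hG.const_mul _).add (hE.const_mul _)) hE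
  rw [integral_add (hG.const_mul _) (hE.const_mul _), integral_const_mul, integral_const_mul, hI] at h0
  have h2s : (2 * s) ≠ 0 := mul_ne_zero two_ne_zero hs0
  rw [div_mul_eq_mul_div, eq_div_iff h2s]
  linear_combination -h0

lemma laplace_sinh (a : ℝ) (ha : 0 < a) (s : ℂ) (hs : 0 < s.re) :
    ∫ t in Set.Ioi (0 : ℝ), (Real.sinh (2 * Real.sqrt (a * t)) : ℂ) * cexp (-(s * t)) =
      (Real.sqrt (Real.pi * a) : ℂ) * MM a s := by
  have hs0 : s ≠ 0 := by rintro rfl; simp at hs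
  rw [← integral_comp_rpow_Ioi_of_pos (p := 2) (by norm_num)]
  set c : ℝ := 2 * Real.sqrt a with hc
  have hG := gauss_moment_int s c hs
  have hgm := gauss_moment s c hs
  have e1 : ∀ u ∈ Set.Ioi (0 : ℝ), ((2 : ℝ) * u ^ ((2 : ℝ) - 1)) •
      ((Real.sinh (2 * Real.sqrt (a * (u ^ (2:ℝ)))) : ℂ) * cexp (-(s * ((u ^ (2:ℝ) : ℝ) : ℂ)))) =
      (u : ℂ) * cexp (-s * u ^ 2 + c * u) + (fun u : ℝ => (u : ℂ) * cexp (-s * u ^ 2 + c * u)) (-u) := by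
    intro u hu
    have hu : 0 < u := hu
    have : (2 : ℝ) - 1 = 1 := by norm_num
    rw [this, Real.rpow_one, Real.rpow_two, Real.sqrt_mul ha.le, Real.sqrt_sq hu.le, ← mul_assoc, ← hc]
    rw [Complex.ofReal_sinh, Complex.sinh, Complex.real_smul]
    have e2 : cexp (-s * u ^ 2 + c * u) = cexp ((c * u : ℝ) : ℂ) * cexp (-(s * ((u ^ 2 : ℝ) : ℂ))) := by
      rw [← Complex.exp_add]; congr 1; push_cast; ring
    have e3 : cexp (-s * ((-u : ℝ) : ℂ) ^ 2 + c * ((-u : ℝ) : ℂ)) =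
        cexp (-((c * u : ℝ) : ℂ)) * cexp (-(s * ((u ^ 2 : ℝ) : ℂ))) := by
      rw [← Complex.exp_add]; congr 1; push_cast; ring
    simp only []
    rw [e2, e3]
    push_cast
    ring
  rw [setIntegral_congr_fun measurableSet_Ioi e1, integral_add hG.integrableOn hG.comp_neg.integrableOn,
    integral_comp_neg_Ioi 0 (fun u : ℝ => (u : ℂ) * cexp (-s * u ^ 2 + c * u)), neg_zero, add_comm, intervalIntegral.integral_Iic_add_Ioi hG.integrableOn
    hG.integrableOn, hgm, half_cpow_re Real.pi Real.pi_pos s hs, MM, Real.sqrt_mul Real.pi_pos.le]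
  have e4 : ((c : ℝ) : ℂ) ^ 2 / (4 * s) = a / s := by
    have : c ^ 2 = 4 * a := by rw [hc, mul_pow, Real.sq_sqrt ha.le]; norm_num
    rw [show ((c : ℝ) : ℂ) ^ 2 = ((c ^ 2 : ℝ) : ℂ) by push_cast; rfl, this]
    push_cast
    field_simp
  rw [e4, hc]
  push_cast
  field_simp

lemma norm_MM (a : ℝ) (s : ℂ) (hs : 0 < s.re) :
    ‖MM a s‖ = Real.exp (a * (s.re / ‖s‖ ^ 2)) * ‖s‖ ^ (-(3 : ℝ) / 2) := by
  have hs0 : s ≠ 0 := by rintro rfl; simp at hs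
  have hn : 0 < ‖s‖ := norm_pos_iff.2 hs0
  rw [MM, norm_div, Complex.norm_exp, norm_mul,
    show ((1 : ℂ) / 2) = ((1 / 2 : ℝ) : ℂ) by push_cast; rfl, Complex.norm_cpow_real, div_eq_mul_inv]
  congr 1
  · rw [Complex.div_re, Complex.normSq_eq_norm_sq]
    simp
    ring
  · rw [show (-(3 : ℝ) / 2) = -(1 + 1 / 2) by norm_num, Real.rpow_neg hn.le, Real.rpow_add hn, Real.rpow_one]

lemma MM_cont (a y : ℝ) (hy : 0 < y) : Continuous (fun x : ℝ => MM a (y - I * x)) := by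
  have hne : ∀ x : ℝ, (y : ℂ) - I * x ∈ Complex.slitPlane := by
    intro x
    left
    simpa using hy
  unfold MM
  refine Continuous.div ?_ ?_ ?_
  · refine Complex.continuous_exp.comp (continuous_const.div (by fun_prop) fun x =>
      Complex.slitPlane_ne_zero (hne x))
  · refine Continuous.mul (by fun_prop) ?_
    exact Continuous.cpow (by fun_prop) continuous_const fun x => hne x
  · intro x
    have := Complex.slitPlane_ne_zero (hne x)
    simp [this]

lemma MM_int (a y : ℝ) (ha : 0 < a) (hy : 0 < y) : Integrable (fun x : ℝ => MM a (y - I * x)) := by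
  have h1 : Integrable (fun x : ℝ => (1 + ‖x‖) ^ (-(3/2 : ℝ))) :=
    integrable_one_add_norm (by simp; norm_num)
  refine Integrable.mono' (h1.const_mul (Real.exp (a / y) * (1 / (1 + 1 / y)) ^ (-(3/2 : ℝ))))
    (MM_cont a y hy).aestronglyMeasurable (Eventually.of_forall fun x => ?_)
  have hre : ((y : ℂ) - I * x).re = y := by simp
  have him : ((y : ℂ) - I * x).im = -x := by simp
  have n1 : y ≤ ‖(y : ℂ) - I * x‖ := by
    have := Complex.abs_re_le_norm ((y : ℂ) - I * x)
    rw [hre, abs_of_pos hy] at this; exact this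
  have n2 : ‖x‖ ≤ ‖(y : ℂ) - I * x‖ := by
    have := Complex.abs_im_le_norm ((y : ℂ) - I * x)
    rw [him, abs_neg] at this; exact this
  rw [norm_MM a _ (by rw [hre]; exact hy), hre, mul_assoc,
    ← Real.mul_rpow (by positivity) (by positivity)]
  refine mul_le_mul ?_ ?_ (by positivity) (by positivity)
  · refine Real.exp_le_exp.2 ?_
    rw [div_eq_mul_one_div a]
    refine mul_le_mul_of_nonneg_left ?_ ha.le
    rw [div_le_div_iff₀ (pow_pos (hy.trans_le n1) 2) hy]
    nlinarith
  · rw [show (-(3 : ℝ) / 2) = -(3/2 : ℝ) by norm_num]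
    refine Real.rpow_le_rpow_of_nonpos (by positivity) ?_ (by norm_num)
    rw [div_mul_eq_mul_div, one_mul, div_le_iff₀ (by positivity)]
    have : 1 ≤ ‖(y : ℂ) - I * x‖ * (1 / y) := by
      rw [mul_one_div, le_div_iff₀ hy]; linarith
    linarith

lemma main_int (a y t : ℝ) (ha : 0 < a) (hy : 0 < y) :
    ∫ x : ℝ, MM a (y - I * x) * cexp ((y - I * x) * t) =
      2 * Real.pi * (Real.sinh (2 * Real.sqrt (a * t)) : ℂ) / (Real.sqrt (Real.pi * a) : ℂ) := by
  have hpi := Real.pi_pos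
  set f : ℝ → ℂ := fun u => (Real.sinh (2 * Real.sqrt (a * u)) * Real.exp (-(y * u)) : ℝ) with hf
  have hfc : Continuous f := by
    rw [hf]
    refine Complex.continuous_ofReal.comp (Continuous.mul ?_ (by fun_prop))
    exact Real.continuous_sinh.comp (by fun_prop)
  have hf0 : ∀ u : ℝ, u ∉ Set.Ioi (0:ℝ) → f u = 0 := by
    intro u hu
    have hu : u ≤ 0 := not_lt.1 hu
    rw [hf]
    simp only []
    rw [Real.sqrt_eq_zero_of_nonpos (by nlinarith)]
    simp
  have hfi : Integrable f := by
    have hon : IntegrableOn f (Set.Ioi 0) := by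
      refine Integrable.mono' (((exp_neg_integrableOn_Ioi 0 (half_pos hy))).const_mul
        (Real.exp (2 * a / y))) hfc.aestronglyMeasurable
        ((ae_restrict_iff' measurableSet_Ioi).2 (Eventually.of_forall fun u hu => ?_))
      have hu : 0 < u := hu
      have h1 : 0 ≤ 2 * Real.sqrt (a * u) := by positivity
      rw [hf]
      simp only []
      rw [Complex.norm_real, Real.norm_eq_abs, abs_of_nonneg (mul_nonneg (Real.sinh_nonneg_iff.2 h1)
        (Real.exp_pos _).le)]
      have h2 : Real.sinh (2 * Real.sqrt (a * u)) ≤ Real.exp (2 * Real.sqrt (a * u)) := by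
        rw [Real.sinh_eq]
        linarith [Real.exp_pos (2 * Real.sqrt (a * u)), Real.exp_pos (-(2 * Real.sqrt (a * u)))]
      refine (mul_le_mul_of_nonneg_right h2 (Real.exp_pos _).le).trans ?_
      rw [← Real.exp_add, ← Real.exp_add]
      refine Real.exp_le_exp.2 ?_
      have h3 : Real.sqrt (a * u) ≤ a / y + y * u / 4 := by
        refine Real.sqrt_le_iff.2 ⟨by positivity, ?_⟩
        have : (a / y + y * u / 4) ^ 2 - a * u = (a / y - y * u / 4) ^ 2 := by
          field_simp
          ring
        nlinarith [sq_nonneg (a / y - y * u / 4)]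
      have h4 : 2 * a / y = 2 * (a / y) := by ring
      rw [h4]
      linarith
    exact (integrableOn_iff_integrable_of_support_subset (fun u hu => by
      by_contra h; exact hu (hf0 u h))).1 hon
  have hF : FourierTransform.fourier f = fun w : ℝ => (Real.sqrt (Real.pi * a) : ℂ) *
      MM a (y - I * ((-(2 * Real.pi) * w : ℝ) : ℂ)) := by
    funext w
    rw [Real.fourier_real_eq_integral_exp_smul, ← laplace_sinh a ha _ (by simpa using hy),
      ← setIntegral_eq_integral_of_forall_compl_eq_zero (s := Set.Ioi (0:ℝ)) (fun u hu => by
        rw [hf0 u hu, smul_zero])]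
    refine setIntegral_congr_fun measurableSet_Ioi fun u hu => ?_
    rw [hf]
    simp only [smul_eq_mul]
    rw [Complex.ofReal_mul (Real.sinh _), Complex.ofReal_exp, mul_left_comm, ← Complex.exp_add]
    congr 2
    push_cast
    ring
  have hMi := MM_int a y ha hy
  have hFi : Integrable (FourierTransform.fourier f) := by
    rw [hF]
    exact (hMi.comp_mul_left' (R := -(2 * Real.pi)) (by linarith)).const_mul _
  have hinv := congrFun (hfc.fourierInv_fourier_eq hfi hFi) t
  rw [Real.fourierInv_eq', hF] at hinv
  have e1 : ∀ w : ℝ, cexp (((2 * Real.pi * inner ℝ w t : ℝ) : ℂ) * I) • ((Real.sqrt (Real.pi * a) : ℂ) *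
      MM a (y - I * ((-(2 * Real.pi) * w : ℝ) : ℂ))) = (Real.sqrt (Real.pi * a) : ℂ) *
      cexp (-(y * t)) * (fun x : ℝ => MM a (y - I * x) * cexp ((y - I * x) * t)) (-(2 * Real.pi) * w) := by
    intro w
    have : cexp (((2 * Real.pi * inner ℝ w t : ℝ) : ℂ) * I) =
        cexp (-(y * t)) * cexp ((y - I * ((-(2 * Real.pi) * w : ℝ) : ℂ)) * t) := by
      rw [← Complex.exp_add]
      congr 1
      simp
      ring
    simp only [smul_eq_mul]
    rw [this]
    ring
  simp_rw [e1] at hinv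
  rw [integral_const_mul, Measure.integral_comp_mul_left
    (fun x : ℝ => MM a (y - I * x) * cexp ((y - I * x) * t))] at hinv
  set J := ∫ x : ℝ, MM a (y - I * x) * cexp ((y - I * x) * t) with hJ
  have e2 : |(-(2 * Real.pi))⁻¹| = (2 * Real.pi)⁻¹ := by
    rw [abs_inv, abs_neg, abs_of_pos (by positivity)]
  rw [e2, hf] at hinv
  simp only [Complex.real_smul] at hinv
  have e3 : cexp (-(y * t)) ≠ 0 := Complex.exp_ne_zero _
  have hq : (Real.sqrt (Real.pi * a) : ℂ) ≠ 0 := by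
    have : 0 < Real.sqrt (Real.pi * a) := Real.sqrt_pos.2 (by positivity)
    exact_mod_cast this.ne'
  have hpc : (Real.pi : ℂ) ≠ 0 := by exact_mod_cast hpi.ne'
  have e4 : ((Real.exp (-(y * t)) : ℝ) : ℂ) = cexp (-(y * t)) := by push_cast; rfl
  rw [Complex.ofReal_mul, e4] at hinv
  rw [eq_div_iff hq]
  have h5 : cexp (-(y * t)) * ((Real.sqrt (Real.pi * a) : ℂ) * ((((2 * Real.pi)⁻¹ : ℝ) : ℂ) * J) -
    (Real.sinh (2 * Real.sqrt (a * t)) : ℂ)) = 0 := by linear_combination hinv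
  have h6 := (mul_eq_zero.1 h5).resolve_left e3
  push_cast at h6 ⊢
  field_simp at h6
  linear_combination h6

lemma v_cases (x y : ℝ) (hx : |x| ≤ 1/2) (hy : 0 < y) (hy2 : y ≤ 1/2) (c d : ℤ) (hcd : IsCoprime c d)
    (hv : y / (x ^ 2 + y ^ 2) < 1) :
    y / ‖(c : ℂ) * (x + y * I) + d‖ ^ 2 ≤ 1 + 1 / (8 * y) ∨
    y / ‖(c : ℂ) * (x + y * I) + d‖ ^ 2 ≤ 1 / (4 * y) - (|x| - 1/2) ^ 2 / (8 * y ^ 3) := by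
  have hn : ‖(c : ℂ) * (x + y * I) + d‖ ^ 2 = (c * x + d) ^ 2 + c ^ 2 * y ^ 2 := by
    rw [← Complex.normSq_eq_norm_sq, Complex.normSq_apply]
    simp
    ring
  rw [hn]
  have hpos : 0 < 1 / (8 * y) := by positivity
  obtain ⟨hx1, hx2⟩ := abs_le.1 hx
  rcases lt_or_ge (2 : ℤ) |c| with hc | hc
  · left
    have h9 : (9 : ℝ) ≤ (c : ℝ) ^ 2 := by
      have : (9 : ℤ) ≤ c ^ 2 := by rw [← sq_abs]; nlinarith
      exact_mod_cast this
    have : y / ((c * x + d) ^ 2 + c ^ 2 * y ^ 2) ≤ 1 / (8 * y) := by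
      have hD : 8 * y ^ 2 ≤ (c * x + d) ^ 2 + (c : ℝ) ^ 2 * y ^ 2 := by
        nlinarith [sq_nonneg ((c : ℝ) * x + d), sq_nonneg y]
      rw [div_le_div_iff₀ (lt_of_lt_of_le (by positivity) hD) (by positivity)]
      nlinarith
    linarith
  · have hc' : c = 0 ∨ c ^ 2 = 1 ∨ c ^ 2 = 4 := by
      obtain ⟨h1, h2⟩ := abs_le.1 hc
      interval_cases c <;> simp
    rcases hc' with h0 | h1 | h4
    · left
      subst h0
      have hd : d ^ 2 = 1 := by
        have := isCoprime_zero_left.1 hcd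
        rcases Int.isUnit_iff.1 this with h | h <;> simp [h]
      have hd' : (d : ℝ) ^ 2 = 1 := by exact_mod_cast hd
      have : ((0 : ℤ) * x + d) ^ 2 + ((0 : ℤ) : ℝ) ^ 2 * y ^ 2 = 1 := by
        push_cast
        linear_combination hd'
      rw [this]
      linarith
    · left
      have h1' : (c : ℝ) ^ 2 = 1 := by exact_mod_cast h1
      have hle : x ^ 2 + y ^ 2 ≤ (c * x + d) ^ 2 + (c : ℝ) ^ 2 * y ^ 2 := by
        have hd : |d| ≤ d ^ 2 := by
          rw [← sq_abs]
          rcases (abs_nonneg d).eq_or_lt with h | h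
          · rw [← h]; norm_num
          · nlinarith
        have hd' : |(d : ℝ)| ≤ (d : ℝ) ^ 2 := by exact_mod_cast hd
        have hcabs : |(c : ℝ)| = 1 := by
          have h8 : |(c : ℝ)| ^ 2 = 1 ^ 2 := by rw [sq_abs, h1']; norm_num
          exact (pow_left_inj₀ (abs_nonneg _) (by norm_num) two_ne_zero).1 h8
        have h2 : |2 * (c : ℝ) * d * x| ≤ |(d : ℝ)| := by
          rw [abs_mul, abs_mul, abs_mul, hcabs, abs_two]
          nlinarith [abs_nonneg (d : ℝ)]
        have h3 := (abs_le.1 h2).1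
        have e : (c * x + d) ^ 2 + (c : ℝ) ^ 2 * y ^ 2 = (c : ℝ) ^ 2 * x ^ 2 + d ^ 2 + 2 * (c : ℝ) * d * x
          + (c : ℝ) ^ 2 * y ^ 2 := by ring
        rw [e, h1']
        linarith
      have : y / ((c * x + d) ^ 2 + (c : ℝ) ^ 2 * y ^ 2) ≤ y / (x ^ 2 + y ^ 2) :=
        div_le_div_of_nonneg_left hy.le (by positivity) hle
      linarith
    · have h4' : (c : ℝ) ^ 2 = 4 := by exact_mod_cast h4
      have hd0 : d ≠ 0 := by
        rintro rfl
        have := isCoprime_zero_right.1 hcd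
        rcases Int.isUnit_iff.1 this with h | h <;> rw [h] at h4 <;> norm_num at h4
      have hd1 : (1 : ℝ) ≤ |(d : ℝ)| := by exact_mod_cast Int.one_le_abs hd0
      have hcabs : |(c : ℝ)| = 2 := by
        have : |(c : ℝ)| ^ 2 = 2 ^ 2 := by rw [sq_abs, h4']; norm_num
        exact (pow_left_inj₀ (abs_nonneg _) (by norm_num) two_ne_zero).1 this
      have hle : 4 * ((|x| - 1/2) ^ 2 + y ^ 2) ≤ (c * x + d) ^ 2 + (c : ℝ) ^ 2 * y ^ 2 := by
        have h5 : |(d : ℝ)| ≤ |c * x + d| + |(c : ℝ) * x| := by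
          have := abs_sub (c * x + d) ((c : ℝ) * x)
          simpa using this
        rw [abs_mul, hcabs] at h5
        have h6 : 1 - 2 * |x| ≤ |c * x + d| := by linarith
        have h7 : (1 - 2 * |x|) ^ 2 ≤ (c * x + d) ^ 2 := by
          rw [← sq_abs (c * x + d)]
          exact pow_le_pow_left₀ (by linarith) h6 2
        rw [h4']
        nlinarith
      have hb : y / ((c * x + d) ^ 2 + (c : ℝ) ^ 2 * y ^ 2) ≤ y / (4 * ((|x| - 1/2) ^ 2 + y ^ 2)) :=
        div_le_div_of_nonneg_left hy.le (by positivity) hle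
      set s := |x| - 1/2 with hs
      rcases le_or_gt (y ^ 2) (s ^ 2) with hsy | hsy
      · left
        have : y / (4 * (s ^ 2 + y ^ 2)) ≤ 1 / (8 * y) := by
          rw [div_le_div_iff₀ (by positivity) (by positivity)]
          nlinarith
        linarith
      · right
        refine hb.trans ?_
        have e : 1 / (4 * y) - s ^ 2 / (8 * y ^ 3) = (2 * y ^ 2 - s ^ 2) / (8 * y ^ 3) := by
          field_simp
          ring
        rw [e, div_le_div_iff₀ (by positivity) (by positivity)]
        have : 0 ≤ y * (s ^ 2 * (y ^ 2 - s ^ 2)) :=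
          mul_nonneg hy.le (mul_nonneg (sq_nonneg _) (by linarith))
        nlinarith

lemma pointwise (a : ℝ) (ha : 0 < a) (Hr : ℂ → ℂ) (A : ℂ) (K : ℝ) (hK0 : 0 ≤ K)
    (h1 : ∀ τ : ℂ, 0 < τ.im → 1 ≤ τ.im / ‖τ‖ ^ 2 → ‖Hr τ - A * MM a (-I * τ)‖ ≤ K * (√(τ.im ^ 3))⁻¹)
    (h2 : ∀ τ : ℂ, 0 < τ.im → τ.im ≤ 1 → ∃ c d : ℤ, IsCoprime c d ∧
      ‖Hr τ‖ ≤ K * (√(τ.im ^ 3))⁻¹ * Real.exp (a * (τ.im / ‖(c : ℂ) * τ + d‖ ^ 2)))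
    (x y : ℝ) (hx : |x| ≤ 1/2) (hy : 0 < y) (hy2 : y ≤ 1/2) :
    ‖Hr (x + y * I) - A * MM a (y - I * x)‖ ≤ (K + ‖A‖) * Real.exp a * ((√(y ^ 3))⁻¹ *
      (Real.exp (a / (8 * y)) + Real.exp (a / (4 * y)) *
        (Real.exp (-(a / (8 * y ^ 3)) * (x - 1/2) ^ 2) + Real.exp (-(a / (8 * y ^ 3)) * (x + 1/2) ^ 2)))) := by
  set τ : ℂ := x + y * I with hτ
  have him : τ.im = y := by simp [hτ]
  have hs : (y : ℂ) - I * x = -I * τ := by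
    rw [hτ]
    linear_combination (y : ℂ) * Complex.I_sq
  have hre : (-I * τ).re = y := by simp [him]
  have hns : ‖-I * τ‖ = ‖τ‖ := by simp
  have hnτ : ‖τ‖ ^ 2 = x ^ 2 + y ^ 2 := by
    rw [← Complex.normSq_eq_norm_sq, Complex.normSq_apply]
    simp [hτ]
    ring
  have hyn : y ≤ ‖τ‖ := by
    have := Complex.abs_im_le_norm τ
    rw [him, abs_of_pos hy] at this
    exact this
  set W := (√(y ^ 3))⁻¹ with hW
  have hW0 : 0 ≤ W := by positivity
  have hWr : y ^ (-(3 : ℝ) / 2) = W := by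
    rw [hW, Real.sqrt_eq_rpow, ← Real.rpow_natCast y 3, ← Real.rpow_mul hy.le, ← Real.rpow_neg hy.le]
    norm_num
  set g1 := Real.exp (-(a / (8 * y ^ 3)) * (x - 1/2) ^ 2)
  set g2 := Real.exp (-(a / (8 * y ^ 3)) * (x + 1/2) ^ 2)
  have hg1 : 0 < g1 := Real.exp_pos _
  have hg2 : 0 < g2 := Real.exp_pos _
  set E8 := Real.exp (a / (8 * y))
  have hE8 : 1 ≤ E8 := Real.one_le_exp (by positivity)
  set E4 := Real.exp (a / (4 * y))
  have hE4 : 0 < E4 := Real.exp_pos _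
  have hea : 1 ≤ Real.exp a := Real.one_le_exp ha.le
  have hX : 0 ≤ E4 * (g1 + g2) := by positivity
  rcases le_or_gt 1 (τ.im / ‖τ‖ ^ 2) with hcase | hcase
  · have := h1 τ (by rw [him]; exact hy) hcase
    rw [him, ← hW] at this
    rw [hs]
    refine this.trans ?_
    have k1 : K ≤ (K + ‖A‖) * Real.exp a := by
      nlinarith [norm_nonneg A]
    refine mul_le_mul k1 ?_ hW0 (by positivity)
    nlinarith
  · rw [him, hnτ] at hcase
    obtain ⟨c, d, hcd, hb⟩ := h2 τ (by rw [him]; exact hy) (by rw [him]; linarith)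
    rw [him, ← hW] at hb
    have hA : ‖A * MM a (y - I * x)‖ ≤ ‖A‖ * (Real.exp a * W) := by
      rw [norm_mul, hs, norm_MM a _ (by rw [hre]; exact hy), hre, hns, hnτ]
      refine mul_le_mul_of_nonneg_left ?_ (norm_nonneg _)
      refine mul_le_mul (Real.exp_le_exp.2 (by nlinarith)) ?_ (by positivity) (by positivity)
      rw [← hWr]
      exact Real.rpow_le_rpow_of_nonpos hy hyn (by norm_num)
    have hexp : Real.exp (a * (y / ‖(c : ℂ) * τ + d‖ ^ 2)) ≤ Real.exp a * (E8 + E4 * (g1 + g2)) := by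
      rcases v_cases x y hx hy hy2 c d hcd hcase with hv | hv
      · have : Real.exp (a * (y / ‖(c : ℂ) * τ + d‖ ^ 2)) ≤ Real.exp a * E8 := by
          rw [← Real.exp_add]
          refine Real.exp_le_exp.2 ((mul_le_mul_of_nonneg_left hv ha.le).trans (le_of_eq ?_))
          field_simp
        nlinarith
      · have hg : Real.exp (-(a / (8 * y ^ 3)) * (|x| - 1/2) ^ 2) ≤ g1 + g2 := by
          rcases le_total 0 x with h | h
          · rw [abs_of_nonneg h]; linarith
          · rw [abs_of_nonpos h, show (-x - 1/2) ^ 2 = (x + 1/2) ^ 2 by ring]; linarith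
        have : Real.exp (a * (y / ‖(c : ℂ) * τ + d‖ ^ 2)) ≤
            E4 * Real.exp (-(a / (8 * y ^ 3)) * (|x| - 1/2) ^ 2) := by
          rw [← Real.exp_add]
          refine Real.exp_le_exp.2 ((mul_le_mul_of_nonneg_left hv ha.le).trans (le_of_eq ?_))
          field_simp
          ring
        have h5 := mul_le_mul_of_nonneg_left hg hE4.le
        nlinarith
    calc ‖Hr τ - A * MM a (y - I * x)‖ ≤ ‖Hr τ‖ + ‖A * MM a (y - I * x)‖ := norm_sub_le _ _
      _ ≤ K * W * (Real.exp a * (E8 + E4 * (g1 + g2))) + ‖A‖ * (Real.exp a * W) := by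
          refine add_le_add (hb.trans ?_) hA
          exact mul_le_mul_of_nonneg_left hexp (by positivity)
      _ ≤ _ := by
          have : ‖A‖ * (Real.exp a * W) * 1 ≤ ‖A‖ * (Real.exp a * W) * (E8 + E4 * (g1 + g2)) :=
            mul_le_mul_of_nonneg_left (by linarith) (by positivity)
          linarith

lemma err_bound (a : ℝ) (ha : 0 < a) (Hr : ℂ → ℂ) (A : ℂ) (K : ℝ) (hK0 : 0 ≤ K)
    (h1 : ∀ τ : ℂ, 0 < τ.im → 1 ≤ τ.im / ‖τ‖ ^ 2 → ‖Hr τ - A * MM a (-I * τ)‖ ≤ K * (√(τ.im ^ 3))⁻¹)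
    (h2 : ∀ τ : ℂ, 0 < τ.im → τ.im ≤ 1 → ∃ c d : ℤ, IsCoprime c d ∧
      ‖Hr τ‖ ≤ K * (√(τ.im ^ 3))⁻¹ * Real.exp (a * (τ.im / ‖(c : ℂ) * τ + d‖ ^ 2))) :
    ∃ B : ℝ, ∀ y t : ℝ, 0 < y → y ≤ 1/2 →
      Continuous (fun x : ℝ => Hr (x + y * I) * cexp ((y - I * x) * t)) →
      ‖(∫ x in (-(1/2) : ℝ)..(1/2), Hr (x + y * I) * cexp ((y - I * x) * t)) -
        A * ∫ x : ℝ, MM a (y - I * x) * cexp ((y - I * x) * t)‖ ≤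
      B * (Real.exp (a / (4 * y)) * Real.exp (y * t)) := by
  set K1 := (K + ‖A‖) * Real.exp a with hK1
  have hK10 : 0 ≤ K1 := by positivity
  set J := ∫ x : ℝ, (1 + ‖x‖) ^ (-(3/2 : ℝ)) with hJ
  set K2 := ‖A‖ * (Real.exp (2 * a) * (1/3 : ℝ) ^ (-(3/2 : ℝ))) with hK2
  have hK20 : 0 ≤ K2 := by positivity
  have hJi : Integrable (fun x : ℝ => (1 + ‖x‖) ^ (-(3/2 : ℝ))) :=
    integrable_one_add_norm (by simp; norm_num)
  have hJ0 : 0 ≤ J := integral_nonneg fun x => by positivity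
  refine ⟨K1 * (128 / a ^ 2) + K1 * (2 * √(8 * Real.pi / a)) + K2 * J, fun y t hy hy2 hcont => ?_⟩
  set W := (√(y ^ 3))⁻¹ with hW
  have hW0 : 0 ≤ W := by positivity
  set E8 := Real.exp (a / (8 * y)) with hE8
  set E4 := Real.exp (a / (4 * y)) with hE4
  have hE80 : 0 < E8 := Real.exp_pos _
  have hE40 : 1 ≤ E4 := Real.one_le_exp (by positivity)
  have hE84 : E8 * E8 = E4 := by
    rw [hE8, hE4, ← Real.exp_add]
    congr 1
    field_simp
    norm_num
  have hb : 0 < a / (8 * y ^ 3) := by positivity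
  set b := a / (8 * y ^ 3) with hbd
  have hMc : Continuous (fun x : ℝ => MM a (y - I * x) * cexp ((y - I * x) * t)) :=
    (MM_cont a y hy).mul (by fun_prop)
  have hnexp : ∀ x : ℝ, ‖cexp (((y : ℂ) - I * x) * t)‖ = Real.exp (y * t) := by
    intro x
    rw [Complex.norm_exp]
    simp
  have hMi : Integrable (fun x : ℝ => MM a (y - I * x) * cexp ((y - I * x) * t)) := by
    refine Integrable.mono' ((MM_int a y ha hy).norm.mul_const (Real.exp (y * t)))
      hMc.aestronglyMeasurable (Eventually.of_forall fun x => ?_)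
    rw [norm_mul, hnexp]
  rw [intervalIntegral.integral_of_le (by norm_num), ← integral_indicator measurableSet_Ioc,
    ← integral_const_mul, ← integral_sub]
  rotate_left
  · rw [integrable_indicator_iff measurableSet_Ioc]
    exact (hcont.integrableOn_Icc).mono_set Set.Ioc_subset_Icc_self
  · exact hMi.const_mul A
  set S := Set.Ioc (-(1/2) : ℝ) (1/2) with hS
  have hg1i : Integrable (fun x : ℝ => Real.exp (-b * (x - 1/2) ^ 2)) :=
    (integrable_exp_neg_mul_sq hb).comp_sub_right (1/2)
  have hg2i : Integrable (fun x : ℝ => Real.exp (-b * (x + 1/2) ^ 2)) :=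
    (integrable_exp_neg_mul_sq hb).comp_add_right (1/2)
  have hg1 : ∫ x : ℝ, Real.exp (-b * (x - 1/2) ^ 2) = √(Real.pi / b) := by
    rw [integral_sub_right_eq_self (fun x : ℝ => Real.exp (-b * x ^ 2)) (1/2), integral_gaussian]
  have hg2 : ∫ x : ℝ, Real.exp (-b * (x + 1/2) ^ 2) = √(Real.pi / b) := by
    rw [integral_add_right_eq_self (fun x : ℝ => Real.exp (-b * x ^ 2)) (1/2), integral_gaussian]
  have hind : Integrable (S.indicator (fun _ : ℝ => K1 * (W * E8))) := by
    rw [integrable_indicator_iff measurableSet_Ioc]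
    exact integrableOn_const (by simp)
  have hindv : ∫ x : ℝ, S.indicator (fun _ : ℝ => K1 * (W * E8)) x = K1 * (W * E8) := by
    rw [integral_indicator measurableSet_Ioc, setIntegral_const]
    simp
    norm_num
  have hI2 := (hg1i.add hg2i).const_mul (K1 * (W * E4))
  have hI3 := hJi.const_mul K2
  have hG := ((hind.add hI2).add hI3).const_mul (Real.exp (y * t))
  refine (norm_integral_le_of_norm_le hG (Eventually.of_forall fun x => ?_)).trans ?_
  · simp only [Pi.add_apply]
    have hJx : 0 ≤ K2 * (1 + ‖x‖) ^ (-(3/2 : ℝ)) := by positivity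
    by_cases hx : x ∈ S
    · rw [Set.indicator_of_mem hx, Set.indicator_of_mem hx, ← mul_assoc, ← sub_mul, norm_mul, hnexp,
        mul_comm]
      refine mul_le_mul_of_nonneg_left ?_ (Real.exp_pos _).le
      have := pointwise a ha Hr A K hK0 h1 h2 x y (abs_le.2 ⟨hx.1.le, hx.2⟩) hy hy2
      rw [← hK1, ← hW, ← hE8, ← hE4, ← hbd] at this
      refine this.trans ?_
      refine le_trans (le_of_eq ?_) (le_add_of_nonneg_right hJx)
      ring
    · rw [Set.indicator_of_notMem hx, Set.indicator_of_notMem hx, zero_sub, norm_neg, norm_mul,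
        norm_mul, hnexp, ← mul_assoc, mul_comm]
      refine mul_le_mul_of_nonneg_left ?_ (Real.exp_pos _).le
      have hx2 : 1/2 ≤ |x| := by
        by_contra hlt
        obtain ⟨u1, u2⟩ := abs_lt.1 (not_le.1 hlt)
        exact hx ⟨u1, u2.le⟩
      have hre : ((y : ℂ) - I * x).re = y := by simp
      have him : ((y : ℂ) - I * x).im = -x := by simp
      have n2 : |x| ≤ ‖(y : ℂ) - I * x‖ := by
        have := Complex.abs_im_le_norm ((y : ℂ) - I * x)
        rw [him, abs_neg] at this; exact this
      have hM : ‖MM a (y - I * x)‖ ≤ Real.exp (2 * a) * (1/3 : ℝ) ^ (-(3/2 : ℝ)) *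
          (1 + ‖x‖) ^ (-(3/2 : ℝ)) := by
        rw [norm_MM a _ (by rw [hre]; exact hy), hre, mul_assoc,
          ← Real.mul_rpow (by positivity) (by positivity)]
        refine mul_le_mul ?_ ?_ (by positivity) (by positivity)
        · refine Real.exp_le_exp.2 ?_
          rw [mul_comm 2 a]
          refine mul_le_mul_of_nonneg_left ?_ ha.le
          rw [div_le_iff₀ (pow_pos (by linarith) 2)]
          nlinarith
        · rw [show (-(3 : ℝ) / 2) = -(3/2 : ℝ) by norm_num]
          refine Real.rpow_le_rpow_of_nonpos (by positivity) ?_ (by norm_num)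
          rw [Real.norm_eq_abs]
          linarith
      have h5 := mul_le_mul_of_nonneg_left hM (norm_nonneg A)
      have h6 : 0 ≤ K1 * (W * E4) * (Real.exp (-b * (x - 1/2) ^ 2) + Real.exp (-b * (x + 1/2) ^ 2)) := by
        positivity
      rw [hK2]
      linarith
  · rw [integral_const_mul, integral_add' (hind.add hI2) hI3, integral_add' hind hI2,
      integral_const_mul, integral_const_mul]
    rw [integral_add' hg1i hg2i, hindv, hg1, hg2, ← hJ]
    have hWb : W * √(Real.pi / b) = √(8 * Real.pi / a) := by
      have : Real.pi / b = 8 * Real.pi / a * y ^ 3 := by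
        rw [hbd]; field_simp
      rw [this, Real.sqrt_mul (by have := Real.pi_pos; positivity), hW]
      have : √(y ^ 3) ≠ 0 := (Real.sqrt_pos.2 (by positivity)).ne'
      field_simp
    have hWE : W ≤ 128 / a ^ 2 * E8 := by
      have hq := Real.quadratic_le_exp_of_nonneg (x := a / (8 * y)) (by positivity)
      have hz : 0 < a / (8 * y) := by positivity
      have h5 : (a / (8 * y)) ^ 2 / 2 ≤ E8 := by rw [hE8]; linarith
      have h6 : W ≤ 1 / y ^ 2 := by
        rw [hW, inv_eq_one_div]
        refine one_div_le_one_div_of_le (by positivity) ?_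
        refine Real.le_sqrt_of_sq_le ?_
        have : 0 ≤ y ^ 3 * (1 - y) := mul_nonneg (by positivity) (by linarith)
        nlinarith
      refine h6.trans ?_
      have h7 : 1 / y ^ 2 = 128 / a ^ 2 * ((a / (8 * y)) ^ 2 / 2) := by
        field_simp
        norm_num
      rw [h7]
      exact mul_le_mul_of_nonneg_left h5 (by positivity)
    have t1 : K1 * (W * E8) ≤ K1 * (128 / a ^ 2) * E4 := by
      have t0 := mul_le_mul_of_nonneg_left (mul_le_mul_of_nonneg_right hWE hE80.le) hK10
      rw [← hE84]
      linarith
    have t2 : K1 * (W * E4) * (√(Real.pi / b) + √(Real.pi / b)) = K1 * (2 * √(8 * Real.pi / a)) * E4 := by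
      rw [← hWb]; ring
    have t3 : K2 * J ≤ K2 * J * E4 := le_mul_of_one_le_right (by positivity) hE40
    rw [t2]
    have := mul_le_mul_of_nonneg_left (add_le_add (add_le_add_left t1
      (K1 * (2 * √(8 * Real.pi / a)) * E4)) t3) (Real.exp_pos (y * t)).le
    refine le_trans (le_of_eq ?_) (this.trans (le_of_eq ?_)) <;> ring

lemma H_err (m : ℕ) (hm : 0 < m) (h g : ℤ → ℂ → ℂ) (C : ℤ → ℤ → ℂ)
    (hOG : ∀ Δ l : ℤ, Δ < -1 → C Δ l = 0)
    (hsum : ∀ l : ℤ, ∀ τ : ℂ, 0 < τ.im →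
      HasSum (fun n : ℤ => C (4 * (m : ℤ) * n - l ^ 2) l *
        ee (((4 * (m : ℤ) * n - l ^ 2 : ℤ) : ℂ) / (4 * (m : ℂ)) * τ)) (h l τ))
    (hghol : ∀ l : ℤ, ∀ τ : ℂ, 0 < τ.im → DifferentiableAt ℂ (g l) τ)
    (hgbdd : ∀ l : ℤ, ∃ B : ℝ, ∀ τ : ℂ, 1 ≤ τ.im → ‖g l τ‖ ≤ B) :
    ∃ K : ℝ, 0 ≤ K ∧ ∀ l : ℕ, l < 2 * m → ∀ τ : ℂ,
      (1 ≤ τ.im ∨ (|τ.re| ≤ 1 / 2 ∧ 1 / 2 ≤ τ.im)) →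
      ‖h l τ + eich (g l) τ - (if (4 * (m : ℤ)) ∣ ((l : ℤ) ^ 2 - 1) then C (-1) l else 0) *
        ee (-1 / (4 * m) * τ)‖ ≤ K := by
  choose K1 hK1 using fun l : ℤ => h_polar m hm (h l) C l hOG (hsum l)
  choose K2 hK2 using fun l : ℤ => eich_bound (g l) (hghol l) (hgbdd l)
  refine ⟨∑ l ∈ Finset.range (2 * m), (|K1 l| + |K2 l|), by positivity, fun l hl τ hτ => ?_⟩
  have hs : |K1 l| + |K2 l| ≤ ∑ l ∈ Finset.range (2 * m), (|K1 l| + |K2 l|) :=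
    Finset.single_le_sum (f := fun l : ℕ => |K1 l| + |K2 l|) (fun i _ => by positivity)
      (Finset.mem_range.2 hl)
  refine le_trans ?_ hs
  have e1 := hK1 l τ (by rcases hτ with h | h; linarith; exact h.2)
  have e2 := hK2 l τ hτ
  rw [add_sub_right_comm]
  refine (norm_add_le _ _).trans (add_le_add (e1.trans (le_abs_self _)) (e2.trans (le_abs_self _)))

lemma norm_polar (m : ℕ) (hm : 0 < m) (τ : ℂ) :
    ‖ee (-1 / (4 * m) * τ)‖ = Real.exp (Real.pi / (2 * m) * τ.im) := by
  have hm' : (m : ℝ) ≠ 0 := by positivity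
  have e : ((-1 : ℂ) / (4 * m) * τ) = ((-1 / (4 * m) : ℝ) : ℂ) * τ := by push_cast; rfl
  rw [norm_ee, e, Complex.im_ofReal_mul]
  congr 1
  field_simp
  ring

lemma H_cond2 (m : ℕ) (hm : 0 < m) (H : ℤ → ℂ → ℂ) (P : ℕ → ℂ)
    (hmod : ModularLaw 2 m (fun τ z =>
      ∑ l ∈ Finset.range (2 * m), H (l : ℤ) τ * jTheta m (l : ℤ) τ z)) (K : ℝ) (hK0 : 0 ≤ K)
    (hK : ∀ l : ℕ, l < 2 * m → ∀ τ : ℂ, (1 ≤ τ.im ∨ (|τ.re| ≤ 1 / 2 ∧ 1 / 2 ≤ τ.im)) →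
      ‖H l τ - P l * ee (-1 / (4 * m) * τ)‖ ≤ K) :
    ∃ K' : ℝ, 0 ≤ K' ∧ ∀ k : ℕ, k < 2 * m → ∀ τ : ℂ, 0 < τ.im → τ.im ≤ 1 →
      ∃ c d : ℤ, IsCoprime c d ∧ ‖H k τ‖ ≤ K' * (√(τ.im ^ 3))⁻¹ *
        Real.exp (Real.pi / (2 * m) * (τ.im / ‖(c : ℂ) * τ + d‖ ^ 2)) := by
  set S := ∑ l ∈ Finset.range (2 * m), ‖P l‖ with hS
  have hS0 : 0 ≤ S := by positivity
  have hb := H_bound m hm H hmod (Real.pi / (2 * m)) (S + K) (fun l hl τ h1 h2 => by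
    have e := hK l hl τ (Or.inr ⟨h1, h2⟩)
    have hs : ‖P l‖ ≤ S := Finset.single_le_sum (f := fun l : ℕ => ‖P l‖)
      (fun i _ => by positivity) (Finset.mem_range.2 hl)
    have h3 : ‖H l τ‖ ≤ ‖P l * ee (-1 / (4 * m) * τ)‖ + ‖H l τ - P l * ee (-1 / (4 * m) * τ)‖ := by
      have := norm_add_le (P l * ee (-1 / (4 * m) * τ)) (H l τ - P l * ee (-1 / (4 * m) * τ))
      rwa [add_sub_cancel] at this
    rw [norm_mul, norm_polar m hm] at h3
    have hE : 1 ≤ Real.exp (Real.pi / (2 * m) * τ.im) := Real.one_le_exp (by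
      have : 0 ≤ τ.im := by linarith
      positivity)
    nlinarith)
  refine ⟨√(2 * m * (S + K) ^ 2), Real.sqrt_nonneg _, fun k hk τ h1 h2 => ?_⟩
  obtain ⟨c, d, hcd, hh⟩ := hb τ h1 h2
  exact ⟨c, d, hcd, hh k hk⟩

lemma H_cond1 (m : ℕ) (hm : 0 < m) (H : ℤ → ℂ → ℂ) (P : ℕ → ℂ)
    (hmod : ModularLaw 2 m (fun τ z =>
      ∑ l ∈ Finset.range (2 * m), H (l : ℤ) τ * jTheta m (l : ℤ) τ z)) (K : ℝ) (hK0 : 0 ≤ K)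
    (hK : ∀ l : ℕ, l < 2 * m → ∀ τ : ℂ, (1 ≤ τ.im ∨ (|τ.re| ≤ 1 / 2 ∧ 1 / 2 ≤ τ.im)) →
      ‖H l τ - P l * ee (-1 / (4 * m) * τ)‖ ≤ K) (k : ℕ) (hk : k < 2 * m) (τ : ℂ) (hτ : 0 < τ.im)
    (h1 : 1 ≤ τ.im / ‖τ‖ ^ 2) :
    ‖H k τ - (-(1 / (√(2 * m : ℝ) : ℂ)) * ∑ l ∈ Finset.range (2 * m), ee (l * k / (2 * m)) * P l) *
      MM (Real.pi / (2 * m)) (-I * τ)‖ ≤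
      (1 / √(2 * m : ℝ) * ∑ l ∈ Finset.range (2 * m), K) * (√(τ.im ^ 3))⁻¹ := by
  have hm' : (0 : ℝ) < m := by exact_mod_cast hm
  have hmc : (m : ℂ) ≠ 0 := by exact_mod_cast hm.ne'
  have hτ0 := ne_of_im τ hτ
  set s : ℂ := -I * τ with hs
  have hs0 : s ≠ 0 := mul_ne_zero (neg_ne_zero.2 I_ne_zero) hτ0
  have hre : s.re = τ.im := by simp [hs]
  have hns : ‖s‖ = ‖τ‖ := by simp [hs]
  have hsh0 : s ^ ((1 : ℂ) / 2) ≠ 0 := by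
    intro h
    rw [Complex.cpow_eq_zero_iff] at h
    exact hs0 h.1
  have hss : s ^ ((1 : ℂ) / 2) * s ^ ((1 : ℂ) / 2) = s := by
    rw [← Complex.cpow_add _ _ hs0]
    norm_num
  have hq0 : (√(2 * m : ℝ) : ℂ) ≠ 0 := by
    have : √(2 * m : ℝ) ≠ 0 := by positivity
    exact_mod_cast this
  have hτs : τ = I * s := by rw [hs, ← mul_assoc]; simp
  have hS := H_S m hm H hmod k hk (-1 / τ) (im_neg_inv_pos τ hτ)
  rw [show -1 / (-1 / τ) = τ by field_simp] at hS
  have e1 : -I * (2 * (m : ℂ) * (-1 / τ)) = ((2 * m : ℝ) : ℂ) / s := by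
    rw [hτs]; push_cast; field_simp
  rw [e1, half_cpow_re _ (by positivity) s (by rw [hre]; exact hτ)] at hS
  have e2 : (-1 / τ) ^ 2 * (1 / ((√(2 * m : ℝ) : ℂ) / s ^ ((1 : ℂ) / 2))) =
      -(1 / (√(2 * m : ℝ) : ℂ)) * (1 / (s * s ^ ((1 : ℂ) / 2))) := by
    rw [div_pow, hτs, mul_pow, I_sq]
    generalize hu : s ^ ((1 : ℂ) / 2) = u at *
    rw [← hss]
    field_simp
  rw [e2] at hS
  have e3 : ee (-1 / (4 * m) * (-1 / τ)) = cexp ((Real.pi / (2 * m) : ℝ) / s) := by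
    rw [ee]
    congr 1
    rw [hτs]; push_cast
    have := I_ne_zero
    field_simp
    norm_num
  have e4 : H k τ - (-(1 / (√(2 * m : ℝ) : ℂ)) *
      ∑ l ∈ Finset.range (2 * m), ee (l * k / (2 * m)) * P l) * MM (Real.pi / (2 * m)) s =
      -(1 / (√(2 * m : ℝ) : ℂ)) * (1 / (s * s ^ ((1 : ℂ) / 2))) *
        ∑ l ∈ Finset.range (2 * m), ee (l * k / (2 * m)) *
          (H l (-1 / τ) - P l * ee (-1 / (4 * m) * (-1 / τ))) := by
    rw [hS, MM, ← e3]
    simp only [mul_sub, Finset.sum_sub_distrib, ← mul_assoc]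
    rw [← Finset.sum_mul]
    ring
  rw [e4]
  have n1 : ‖(1 : ℂ) / (s * s ^ ((1 : ℂ) / 2))‖ ≤ (√(τ.im ^ 3))⁻¹ := by
    have := norm_MM 0 s (by rw [hre]; exact hτ)
    simp only [MM, ofReal_zero, zero_div, Complex.exp_zero, zero_mul, Real.exp_zero, one_mul] at this
    rw [this, hns]
    have hW : (√(τ.im ^ 3))⁻¹ = τ.im ^ (-(3 : ℝ) / 2) := by
      rw [Real.sqrt_eq_rpow, ← Real.rpow_natCast τ.im 3, ← Real.rpow_mul hτ.le, ← Real.rpow_neg hτ.le]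
      norm_num
    rw [hW]
    exact Real.rpow_le_rpow_of_nonpos hτ ((le_abs_self _).trans (Complex.abs_im_le_norm τ)) (by norm_num)
  have n2 : ‖∑ l ∈ Finset.range (2 * m), ee (l * k / (2 * m)) *
          (H l (-1 / τ) - P l * ee (-1 / (4 * m) * (-1 / τ)))‖ ≤ ∑ l ∈ Finset.range (2 * m), K := by
    refine norm_sum_le_of_le _ (fun l hl => ?_)
    have e5 : ‖ee ((l : ℂ) * k / (2 * m))‖ = 1 := by
      have : ((l : ℂ) * k / (2 * m)) = ((l * k / (2 * m) : ℝ) : ℂ) := by push_cast; rfl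
      rw [norm_ee, this, Complex.ofReal_im]
      simp
    rw [norm_mul, e5, one_mul]
    exact hK l (Finset.mem_range.1 hl) _ (Or.inl (by rw [im_neg_inv]; exact h1))
  have n3 : ‖-(1 / (√(2 * m : ℝ) : ℂ))‖ = 1 / √(2 * m : ℝ) := by
    rw [norm_neg, norm_div, norm_one, Complex.norm_real, Real.norm_of_nonneg (Real.sqrt_nonneg _)]
  rw [norm_mul, norm_mul, n3]
  calc _ ≤ 1 / √(2 * m : ℝ) * (√(τ.im ^ 3))⁻¹ * ∑ l ∈ Finset.range (2 * m), K := by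
        gcongr
    _ = _ := by ring

lemma C_mod (m : ℕ) (C : ℤ → ℤ → ℂ) (hCper : ∀ Δ l : ℤ, C Δ (l + 2 * (m : ℤ)) = C Δ l)
    (Δ l n : ℤ) : C Δ (l + 2 * m * n) = C Δ l := by
  induction n using Int.induction_on with
  | zero => simp
  | succ i ih => rw [← ih, ← hCper Δ (l + 2 * m * i)]; congr 1; ring
  | pred i ih => rw [← ih, ← hCper Δ (l + 2 * m * (-i - 1))]; congr 1; ring

lemma kapp_mod (m : ℕ) (hm : 0 < m) (C : ℤ → ℤ → ℂ) (r n : ℤ) :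
    kapp m C (r + 2 * m * n) = kapp m C r := by
  have hm' : (m : ℝ) ≠ 0 := by positivity
  unfold kapp
  congr 1
  refine Finset.sum_congr rfl (fun l _ => ?_)
  congr 2
  rw [← Real.cos_add_int_mul_two_pi (Real.pi * l * r / m) (l * n)]
  congr 1
  push_cast
  field_simp

lemma kapp_sum (m : ℕ) (hm : 0 < m) (C : ℤ → ℤ → ℂ)
    (hCper : ∀ Δ l : ℤ, C Δ (l + 2 * (m : ℤ)) = C Δ l)
    (hCsym : ∀ Δ l : ℤ, C Δ (-l) = C Δ l) (k : ℕ) :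
    -∑ l ∈ Finset.range (2 * m), ee (l * k / (2 * m)) *
      (if (4 * (m : ℤ)) ∣ ((l : ℤ) ^ 2 - 1) then C (-1) l else 0) = kapp m C k := by
  have hmc : (m : ℂ) ≠ 0 := by exact_mod_cast hm.ne'
  set P : ℤ → ℂ := fun l => if (4 * (m : ℤ)) ∣ (l ^ 2 - 1) then C (-1) l else 0 with hP
  have hPper : ∀ l : ℤ, P (2 * m - l) = P l := by
    intro l
    have hc : C (-1) (2 * m - l) = C (-1) l := by
      rw [← hCsym (-1) l, ← hCper (-1) (-l)]; congr 1; ring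
    have hd : (4 * (m : ℤ)) ∣ ((2 * m - l) ^ 2 - 1) ↔ (4 * (m : ℤ)) ∣ (l ^ 2 - 1) := by
      rw [show (2 * (m : ℤ) - l) ^ 2 - 1 = (l ^ 2 - 1) + 4 * m * (m - l) by ring]
      exact (dvd_add_left (dvd_mul_right _ _))
    simp only [hP, hc, hd]
  set f : ℕ → ℂ := fun l => ee (l * k / (2 * m)) * P l with hf
  have hrefl : ∑ l ∈ Finset.range (2 * m), f l =
      ∑ l ∈ Finset.range (2 * m), ee (-(l * k / (2 * m))) * P l := by
    have h0 : ∀ F : ℕ → ℂ, F (2 * m) = F 0 → ∑ l ∈ Finset.range (2 * m), F l =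
        ∑ l ∈ Finset.range (2 * m), F (2 * m - l) := by
      intro F hF
      have a1 := Finset.sum_range_reflect F (2 * m + 1)
      rw [Finset.sum_range_succ, Finset.sum_range_succ F] at a1
      have e : ∀ j, 2 * m + 1 - 1 - j = 2 * m - j := fun j => by omega
      simp only [e, Nat.sub_self, hF] at a1
      exact (add_right_cancel a1).symm
    have hp0 : P ((2 * m : ℕ) : ℤ) = P ((0 : ℕ) : ℤ) := by
      have := hPper 0
      push_cast
      simpa using this
    have hen : ∀ x : ℂ, ee (k - x) = ee (-x) := by
      intro x
      have := ee_int k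
      rw [sub_eq_add_neg, ee_add]
      push_cast at this
      rw [this, one_mul]
    rw [h0 f (by
      simp only [hf]
      rw [hp0]
      congr 1
      have := ee_int k
      push_cast at this ⊢
      rw [show 2 * (m : ℂ) * k / (2 * m) = k by field_simp, this]
      simp [ee_zero])]
    refine Finset.sum_congr rfl (fun l hl => ?_)
    have hl' : l ≤ 2 * m := (Finset.mem_range.1 hl).le
    simp only [hf]
    push_cast [Nat.cast_sub hl']
    rw [hPper l, ← hen]
    congr 2
    field_simp
  have hcos : ∀ l : ℕ, ee (l * k / (2 * m)) + ee (-(l * k / (2 * m))) =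
      2 * (Real.cos (Real.pi * (l : ℝ) * ((k : ℤ) : ℝ) / (m : ℝ)) : ℂ) := by
    intro l
    rw [Complex.ofReal_cos, Complex.two_cos, ee, ee]
    push_cast
    congr 2 <;> field_simp
  rw [kapp, Finset.sum_filter]
  congr 1
  have h2 : (2 : ℂ) * ∑ l ∈ Finset.range (2 * m), f l = 2 * ∑ l ∈ Finset.range (2 * m),
      P l * (Real.cos (Real.pi * (l : ℝ) * ((k : ℤ) : ℝ) / (m : ℝ)) : ℂ) := by
    rw [two_mul]
    nth_rewrite 2 [hrefl]
    rw [← Finset.sum_add_distrib, Finset.mul_sum]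
    refine Finset.sum_congr rfl (fun l _ => ?_)
    simp only [hf]
    rw [← add_mul, hcos]
    ring
  have h3 := mul_left_cancel₀ two_ne_zero h2
  have hset : (do let a ← Finset.range (2 * m); pure (a : ℤ) : Finset ℤ) =
      (Finset.range (2 * m)).image (fun a : ℕ => (a : ℤ)) := by
    ext x
    simp only [Finset.bind_def, Finset.pure_def, Finset.mem_sup, Finset.mem_singleton,
      Finset.mem_image, eq_comm]
  rw [hset, Finset.sum_image (fun a _ b _ hab => by exact_mod_cast hab)]
  refine h3.trans (Finset.sum_congr rfl (fun l _ => ?_))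
  simp only [hP, ite_mul, zero_mul, Int.cast_natCast]

/-- Theorem: let `φ = ∑_{ℓ mod 2m} h_ℓ·θ_{m,ℓ}` be a mock Jacobi form of weight 2 and index
`m` with optimal growth (coefficients `C(Δ,ℓ)`, shadow data `g_ℓ`, modular completion
`∑_ℓ (h_ℓ + g_ℓ*)·θ_{m,ℓ}`). Then for each `r`, as `Δ → ∞` with `Δ ≡ -r² (mod 4m)`, one has
`C(Δ,r) = κ_r·e^{π√Δ/m} + O(e^{π√Δ/2m})`. -/
theorem mock_jacobi_coefficient_asymptotics (m : ℕ) (hm : 0 < m)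
    (h g : ℤ → ℂ → ℂ) (C : ℤ → ℤ → ℂ)
    (hper : ∀ l : ℤ, h (l + 2 * (m : ℤ)) = h l) (hsym : ∀ l : ℤ, h (-l) = h l)
    (hCper : ∀ Δ l : ℤ, C Δ (l + 2 * (m : ℤ)) = C Δ l)
    (hCsym : ∀ Δ l : ℤ, C Δ (-l) = C Δ l)
    (hOG : ∀ Δ l : ℤ, Δ < -1 → C Δ l = 0)
    (hhol : ∀ l : ℤ, ∀ τ : ℂ, 0 < τ.im → DifferentiableAt ℂ (h l) τ)
    (hsum : ∀ l : ℤ, ∀ τ : ℂ, 0 < τ.im →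
      HasSum (fun n : ℤ => C (4 * (m : ℤ) * n - l ^ 2) l *
        ee (((4 * (m : ℤ) * n - l ^ 2 : ℤ) : ℂ) / (4 * (m : ℂ)) * τ)) (h l τ))
    (hgper : ∀ l : ℤ, g (l + 2 * (m : ℤ)) = g l) (hgsym : ∀ l : ℤ, g (-l) = g l)
    (hghol : ∀ l : ℤ, ∀ τ : ℂ, 0 < τ.im → DifferentiableAt ℂ (g l) τ)
    (hgbdd : ∀ l : ℤ, ∃ B : ℝ, ∀ τ : ℂ, 1 ≤ τ.im → ‖g l τ‖ ≤ B)
    (hmod : ModularLaw 2 m (fun τ z =>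
      ∑ l ∈ Finset.range (2 * m), (h (l : ℤ) τ + eich (g (l : ℤ)) τ) * jTheta m (l : ℤ) τ z)) :
    ∀ r : ℤ, ∃ (B : ℝ) (Δ₀ : ℤ), ∀ Δ : ℤ, Δ₀ ≤ Δ → 0 < Δ → (4 * (m : ℤ)) ∣ (Δ + r ^ 2) →
      ‖C Δ r - kapp m C r * (Real.exp (Real.pi * Real.sqrt (Δ : ℝ) / (m : ℝ)) : ℂ)‖ ≤
        B * Real.exp (Real.pi * Real.sqrt (Δ : ℝ) / (2 * (m : ℝ))) := by
  intro r
  have hm' : (0 : ℝ) < m := by exact_mod_cast hm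
  have hmc : (m : ℂ) ≠ 0 := by exact_mod_cast hm.ne'
  set a : ℝ := Real.pi / (2 * m) with ha
  have ha0 : 0 < a := by have := Real.pi_pos; positivity
  obtain ⟨k, n, hk, hr⟩ : ∃ (k : ℕ) (n : ℤ), k < 2 * m ∧ r = k + 2 * m * n := by
    have h2 : (0 : ℤ) < 2 * m := by positivity
    have h3 := Int.emod_nonneg r h2.ne'
    have h4 := Int.emod_lt_of_pos r h2
    have h5 := Int.emod_add_mul_ediv r (2 * m)
    refine ⟨(r % (2 * m)).toNat, r / (2 * m), by omega, ?_⟩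
    rw [Int.toNat_of_nonneg h3, h5]
  rw [hr, kapp_mod m hm]
  obtain ⟨K, hK0, hK⟩ := H_err m hm h g C hOG hsum hghol hgbdd
  set H : ℤ → ℂ → ℂ := fun l τ => h l τ + eich (g l) τ with hH
  set P : ℕ → ℂ := fun l => if (4 * (m : ℤ)) ∣ ((l : ℤ) ^ 2 - 1) then C (-1) l else 0 with hP
  obtain ⟨K', hK'0, hK'⟩ := H_cond2 m hm H P hmod K hK0 hK
  set K'' := 1 / √(2 * m : ℝ) * ∑ l ∈ Finset.range (2 * m), K with hK''
  have hK''0 : 0 ≤ K'' := by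
    have : 0 ≤ ∑ l ∈ Finset.range (2 * m), K := Finset.sum_nonneg (fun _ _ => hK0)
    positivity
  set A : ℂ := -(1 / (√(2 * m : ℝ) : ℂ)) * ∑ l ∈ Finset.range (2 * m), ee (l * k / (2 * m)) * P l
    with hA
  have hq0 : (√(2 * m : ℝ) : ℂ) ≠ 0 := by
    have : √(2 * m : ℝ) ≠ 0 := by positivity
    exact_mod_cast this
  have hAk : A * (√(2 * m : ℝ) : ℂ) = kapp m C k := by
    have hks : -∑ l ∈ Finset.range (2 * m), ee (l * k / (2 * m)) * P l = kapp m C k :=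
      kapp_sum m hm C hCper hCsym k
    rw [← hks, hA]
    generalize (∑ l ∈ Finset.range (2 * m), ee (l * k / (2 * m)) * P l) = Z
    field_simp
  obtain ⟨B, hB⟩ := err_bound a ha0 (H k) A (K'' + K') (by positivity)
    (fun τ hτ h1 => (H_cond1 m hm H P hmod K hK0 hK k hk τ hτ h1).trans
      (mul_le_mul_of_nonneg_right (by linarith) (by positivity)))
    (fun τ hτ hτ1 => by
      obtain ⟨c, d, hcd, hb⟩ := hK' k hk τ hτ hτ1
      refine ⟨c, d, hcd, hb.trans ?_⟩
      gcongr
      linarith)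
  refine ⟨B + ‖kapp m C k‖, 0, fun Δ _ hΔ hd => ?_⟩
  rw [C_mod m C hCper]
  have hd' : (4 * (m : ℤ)) ∣ (Δ + (k : ℤ) ^ 2) := by
    rw [show Δ + ((k : ℤ) + 2 * m * n) ^ 2 = (Δ + (k : ℤ) ^ 2) + 4 * m * (k * n + m * n ^ 2) by ring] at hd
    exact (dvd_add_left (dvd_mul_right _ _)).1 hd
  have hΔ1 : (1 : ℝ) ≤ Δ := by exact_mod_cast hΔ
  set S := √(Δ : ℝ) with hS
  have hS1 : 1 ≤ S := by rw [hS]; exact Real.one_le_sqrt.2 hΔ1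
  have hSS : S * S = Δ := Real.mul_self_sqrt (by linarith)
  set y : ℝ := 1 / (2 * S) with hy
  have hy0 : 0 < y := by positivity
  have hy2 : y ≤ 1 / 2 := by
    rw [hy]
    exact one_div_le_one_div_of_le (by norm_num) (by linarith)
  set t : ℝ := a * Δ with ht
  obtain ⟨hcont, hint⟩ := coeff_int m hm h g C hhol hsum hghol hgbdd hmod k hk Δ hΔ hd' y hy0
  have hee : ∀ x : ℝ, ee (-((Δ : ℂ) / (4 * m) * (x + y * I))) = cexp ((y - I * x) * t) := by
    intro x
    rw [ee, ht, ha]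
    congr 1
    push_cast
    field_simp
    ring_nf
    rw [I_sq]
    ring
  simp only [hee] at hcont hint
  have hBB := hB y t hy0 hy2 hcont
  have hint' : ∫ x in (-(1/2) : ℝ)..(1/2), H k (x + y * I) * cexp ((y - I * x) * t) = C Δ k := hint
  rw [hint', main_int a y t ha0 hy0] at hBB
  have hX : 2 * √(a * t) = Real.pi * S / m := by
    rw [ht, ← hSS, show a * (a * (S * S)) = (a * S) * (a * S) by ring,
      Real.sqrt_mul_self (by positivity), ha]
    field_simp
  have hE : Real.exp (a / (4 * y)) * Real.exp (y * t) = Real.exp (Real.pi * S / (2 * m)) := by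
    rw [← Real.exp_add]
    congr 1
    rw [ht, ← hSS, hy, ha]
    field_simp
    ring
  have hsq : (2 : ℝ) * Real.pi / √(Real.pi * a) = 2 * √(2 * m) := by
    have hp := Real.pi_pos
    have e : Real.pi * a = Real.pi ^ 2 / (2 * m) := by rw [ha]; field_simp
    rw [e, Real.sqrt_div (by positivity), Real.sqrt_sq hp.le]
    field_simp
  set X := Real.pi * S / m with hXd
  have hval : A * (2 * Real.pi * (Real.sinh (2 * √(a * t)) : ℂ) / (√(Real.pi * a) : ℂ)) =
      kapp m C k * (Real.exp X : ℂ) - kapp m C k * (Real.exp (-X) : ℂ) := by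
    rw [hX, Real.sinh_eq]
    have : (2 * Real.pi * (((Real.exp X - Real.exp (-X)) / 2 : ℝ) : ℂ) / (√(Real.pi * a) : ℂ)) =
      ((2 * Real.pi / √(Real.pi * a) : ℝ) : ℂ) * ((Real.exp X - Real.exp (-X)) / 2 : ℝ) := by
      push_cast; ring
    rw [this, hsq, ← hAk]
    push_cast
    ring
  rw [hval, hE] at hBB
  have hXn : Real.exp (-X) ≤ Real.exp (Real.pi * S / (2 * m)) := by
    have hp := Real.pi_pos
    have h1 : 0 ≤ X := by positivity
    have h2 : 0 ≤ Real.pi * S / (2 * m) := by positivity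
    exact Real.exp_le_exp.2 (by linarith)
  have hfin : C Δ k - kapp m C k * (Real.exp X : ℂ) =
      (C Δ k - (kapp m C k * (Real.exp X : ℂ) - kapp m C k * (Real.exp (-X) : ℂ))) -
        kapp m C k * (Real.exp (-X) : ℂ) := by ring
  rw [hfin]
  refine (norm_sub_le _ _).trans ?_
  rw [add_mul]
  refine add_le_add hBB ?_
  rw [norm_mul, Complex.norm_real, Real.norm_of_nonneg (Real.exp_pos _).le]
  exact mul_le_mul_of_nonneg_left hXn (norm_nonneg _)
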